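/- arXiv:1201.2803 — 3 statements merged into one kernel-verified Lean document; each statement's English description precedes it below -/
import Mathlib

section
/- Let C = {C_1,…,C_K} be a clustering of {1,…,n} and let A be an n×n stochastic matrix that has inter-cluster common influence w.r.t. C, has cluster-spanning-trees w.r.t. C, and has all diagonal entries positive. Let u : ℕ → ℝ be such that both |u(t)| and |Σ_{k=0}^{t} u(k)| are bounded over t, let α_1,…,α_K ∈ ℝ, and define the input I(t) ∈ ℝ^n by I_i(t) = α_p u(t) for i ∈ C_p. Then every solution of x(t+1) = A x(t) + I(t) is bounded (sup_t max_i |x_i(t)| < ∞) and intra-cluster synchronizes: |x_i(t) − x_j(t)| → 0 as t → ∞ for all i, j lying in the same cluster. -/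
open Finset Filter Topology Matrix

/-- An `n × n` real matrix is stochastic if all entries are nonnegative and
every row sums to `1`. -/
def IsStochastic {n : ℕ} (A : Matrix (Fin n) (Fin n) ℝ) : Prop :=
  (∀ i j, 0 ≤ A i j) ∧ ∀ i, ∑ j, A i j = 1

/-- A clustering of `{1,…,n}`: pairwise disjoint subsets whose union is everything. -/
def IsClustering {n K : ℕ} (C : Fin K → Finset (Fin n)) : Prop :=
  (∀ p q, p ≠ q → Disjoint (C p) (C q)) ∧ ∀ i, ∃ p, i ∈ C p

/-- Reachability along directed edges of `G(A)`: edge from `j` to `i` iff `A i j > 0`. -/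
def Reaches {n : ℕ} (A : Matrix (Fin n) (Fin n) ℝ) : Fin n → Fin n → Prop :=
  Relation.ReflTransGen fun j i => 0 < A i j

/-- `A` has cluster-spanning-trees w.r.t. `C`: for each cluster there is a vertex from
which every vertex of the cluster is reachable in `G(A)`. -/
def HasClusterSpanningTrees {n K : ℕ} (C : Fin K → Finset (Fin n))
    (A : Matrix (Fin n) (Fin n) ℝ) : Prop :=
  ∀ p, ∃ v, ∀ i ∈ C p, Reaches A v i

/-- Inter-cluster common influence: `∑_{j ∈ C q} A i j` is the same for all `i ∈ C p`. -/
def InterClusterCommonInfluence {n K : ℕ} (C : Fin K → Finset (Fin n))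
    (A : Matrix (Fin n) (Fin n) ℝ) : Prop :=
  ∀ p q, ∀ i ∈ C p, ∀ i' ∈ C p, ∑ j ∈ C q, A i j = ∑ j ∈ C q, A i' j

/-- Cluster ergodicity coefficient
`μ_C(A) = min_p min_{i,j ∈ C p} ∑_k min (A i k) (A j k)`. -/
noncomputable def muC {n K : ℕ} (C : Fin K → Finset (Fin n))
    (A : Matrix (Fin n) (Fin n) ℝ) : ℝ :=
  sInf {s | ∃ p, ∃ i ∈ C p, ∃ j ∈ C p, s = ∑ k, min (A i k) (A j k)}

/-- Cluster Hajnal diameter `Δ_C(A) = max_p max_{i,j ∈ C p} max_k |A i k - A j k|`. -/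
noncomputable def DeltaC {n K : ℕ} (C : Fin K → Finset (Fin n))
    (A : Matrix (Fin n) (Fin n) ℝ) : ℝ :=
  sSup {d | ∃ p, ∃ i ∈ C p, ∃ j ∈ C p, ∃ k, d = |A i k - A j k|}

/-- The cluster-consensus subspace `S_C`. -/
def SC {n K : ℕ} (C : Fin K → Finset (Fin n)) : Set (Fin n → ℝ) :=
  {x | ∀ p, ∀ i ∈ C p, ∀ j ∈ C p, x i = x j}

/-- Left product `prodFrom A a m = A (a+m-1) * ⋯ * A (a+1) * A a` (with `m` factors). -/
def prodFrom {n : ℕ} (A : ℕ → Matrix (Fin n) (Fin n) ℝ) (a : ℕ) :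
    ℕ → Matrix (Fin n) (Fin n) ℝ
  | 0 => 1
  | m + 1 => A (a + m) * prodFrom A a m

/-!
The positive diagonal makes `A = (1 - l) + l P` a lazy version of a stochastic matrix `P`, so the
powers of `A` form a Krasnoselskii iteration and Ishikawa's theorem gives `A ^ t (A - 1) → 0` in
norm. A generalized inverse `G` of `A - 1` turns this into geometric decay, since
`A ^ (k + m) (A - 1) = (A ^ m (A - 1) G) (A ^ k (A - 1))`. After a summation by parts, `x t` is
bounded by the partial sums of the input times the sum of the norms `‖A ^ t (A - 1)‖`.

By common influence, `x t - A ^ t (x 0)` is constant on each cluster, so synchronization does not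
depend on the input. Reachability from a common root, with the positive diagonal, makes any two rows
of a cluster overlap in some power `A ^ m`, which therefore contracts the spread of a vector within
the clusters.
-/

open scoped Matrix.Norms.Operator

section AveragedIteration

variable {E : Type*} [SeminormedAddCommGroup E] [NormedSpace ℝ E] {l : ℝ} {x y : ℕ → E}

/-- A Krasnoselskii iteration: `x (n + 1)` averages `x n` with `y n`, where the `y n` move no more
than the `x n` do. The example to keep in mind is `y n = T (x n)` for a nonexpansive map `T`. -/
structure AveragedIteration (l : ℝ) (x y : ℕ → E) : Prop where
  pos : 0 < l
  lt_one : l < 1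
  succ_eq : ∀ n, x (n + 1) = (1 - l) • x n + l • y n
  norm_sub_le : ∀ n, ‖y (n + 1) - y n‖ ≤ ‖x (n + 1) - x n‖

lemma one_add_mul_le_inv_one_sub_pow (hl0 : 0 ≤ l) (hl1 : l < 1) (n : ℕ) :
    1 + n * l ≤ (1 - l)⁻¹ ^ n := by
  have hinv : 1 + l ≤ (1 - l)⁻¹ := by
    rw [← one_div, le_div_iff₀ (sub_pos.2 hl1)]
    nlinarith [sq_nonneg l]
  calc 1 + n * l ≤ (1 + l) ^ n := one_add_mul_le_pow (by linarith) n
    _ ≤ (1 - l)⁻¹ ^ n := by gcongr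

namespace AveragedIteration

lemma succ_sub_self (h : AveragedIteration l x y) (n : ℕ) :
    x (n + 1) - x n = l • (y n - x n) := by
  rw [h.succ_eq]
  module

lemma norm_succ_sub_self (h : AveragedIteration l x y) (n : ℕ) :
    ‖x (n + 1) - x n‖ = l * ‖y n - x n‖ := by
  rw [h.succ_sub_self, norm_smul, Real.norm_of_nonneg h.pos.le]

lemma antitone_norm_sub (h : AveragedIteration l x y) : Antitone fun n => ‖y n - x n‖ := by
  refine antitone_nat_of_succ_le fun n => ?_
  have hl : 0 ≤ 1 - l := sub_nonneg.2 h.lt_one.le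
  have hsplit : y (n + 1) - x (n + 1) = (y (n + 1) - y n) + (1 - l) • (y n - x n) := by
    rw [h.succ_eq]
    module
  calc ‖y (n + 1) - x (n + 1)‖ ≤ ‖y (n + 1) - y n‖ + ‖(1 - l) • (y n - x n)‖ :=
        hsplit ▸ norm_add_le _ _
    _ ≤ l * ‖y n - x n‖ + (1 - l) * ‖y n - x n‖ := by
        rw [norm_smul, Real.norm_of_nonneg hl, ← h.norm_succ_sub_self]
        gcongr
        exact h.norm_sub_le n
    _ = ‖y n - x n‖ := by ring

lemma norm_add_sub_le (h : AveragedIteration l x y) (i n : ℕ) :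
    ‖y (i + n) - y i‖ ≤ n * (l * ‖y i - x i‖) := by
  rw [← dist_eq_norm, dist_comm]
  calc dist (y i) (y (i + n)) ≤ ∑ k ∈ range n, dist (y (i + k)) (y (i + (k + 1))) :=
        dist_le_range_sum_dist (fun k => y (i + k)) n
    _ ≤ ∑ _k ∈ range n, l * ‖y i - x i‖ := by
        refine sum_le_sum fun k _ => ?_
        rw [dist_comm, dist_eq_norm]
        calc ‖y (i + k + 1) - y (i + k)‖ ≤ l * ‖y (i + k) - x (i + k)‖ :=
              (h.norm_sub_le _).trans_eq (h.norm_succ_sub_self _)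
          _ ≤ l * ‖y i - x i‖ :=
              mul_le_mul_of_nonneg_left (h.antitone_norm_sub (Nat.le_add_right i k)) h.pos.le
    _ = n * (l * ‖y i - x i‖) := by rw [sum_const, card_range, nsmul_eq_mul]

/-- The Goebel–Kirk inequality: for fixed `n`, the last term vanishes as `i → ∞`. -/
lemma one_add_mul_norm_sub_le (h : AveragedIteration l x y) (i n : ℕ) :
    (1 + n * l) * ‖y i - x i‖ ≤
      ‖y (i + n) - x i‖ + (1 - l)⁻¹ ^ n * (‖y i - x i‖ - ‖y (i + n) - x (i + n)‖) := by
  have hl : 0 < 1 - l := sub_pos.2 h.lt_one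
  induction n generalizing i with
  | zero => simp
  | succ n ih =>
    have htri : ‖y (i + (n + 1)) - x (i + 1)‖ ≤
        (1 - l) * ‖y (i + (n + 1)) - x i‖ + l * ((n + 1) * (l * ‖y i - x i‖)) := by
      have hsplit : y (i + (n + 1)) - x (i + 1) =
          (1 - l) • (y (i + (n + 1)) - x i) + l • (y (i + (n + 1)) - y i) := by
        rw [h.succ_eq]
        module
      rw [hsplit]
      refine (norm_add_le _ _).trans ?_
      rw [norm_smul, norm_smul, Real.norm_of_nonneg hl.le, Real.norm_of_nonneg h.pos.le]
      have := h.norm_add_sub_le i (n + 1)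
      push_cast at this
      gcongr
      exact h.pos.le
    have hmono : ((1 - l)⁻¹ ^ n - (1 + n * l)) * ‖y (i + 1) - x (i + 1)‖ ≤
        ((1 - l)⁻¹ ^ n - (1 + n * l)) * ‖y i - x i‖ :=
      mul_le_mul_of_nonneg_left (h.antitone_norm_sub (Nat.le_succ i))
        (sub_nonneg.2 (one_add_mul_le_inv_one_sub_pow h.pos.le h.lt_one n))
    have hstep := ih (i + 1)
    rw [add_right_comm, add_assoc i n 1] at hstep
    rw [← mul_le_mul_iff_right₀ hl]
    calc (1 - l) * ((1 + (n + 1 : ℕ) * l) * ‖y i - x i‖)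
        = (1 + n * l) * ‖y i - x i‖ - l * ((n + 1) * (l * ‖y i - x i‖)) := by push_cast; ring
      _ ≤ (1 - l) * ‖y (i + (n + 1)) - x i‖ +
          (1 - l)⁻¹ ^ n * (‖y i - x i‖ - ‖y (i + (n + 1)) - x (i + (n + 1))‖) := by linarith
      _ = _ := by
        rw [pow_succ]
        field_simp

theorem tendsto_norm_sub (h : AveragedIteration l x y) {R : ℝ} (hx : ∀ n, ‖x n‖ ≤ R) :
    Tendsto (fun n => ‖y n - x n‖) atTop (𝓝 0) := by
  have hlim := tendsto_atTop_ciInf h.antitone_norm_sub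
    ⟨0, Set.forall_mem_range.2 fun _ => norm_nonneg _⟩
  set d := ⨅ n, ‖y n - x n‖
  have hd : 0 ≤ d := le_ciInf fun _ => norm_nonneg _
  have hdist : ∀ i n, ‖y (i + n) - x i‖ ≤ ‖y 0 - x 0‖ + (R + R) := fun i n =>
    calc ‖y (i + n) - x i‖ ≤ ‖y (i + n) - x (i + n)‖ + ‖x (i + n) - x i‖ :=
          norm_sub_le_norm_sub_add_norm_sub _ _ _
      _ ≤ ‖y 0 - x 0‖ + (R + R) := add_le_add (h.antitone_norm_sub (Nat.zero_le _))
          ((_root_.norm_sub_le _ _).trans (add_le_add (hx _) (hx _)))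
  have hlinear : ∀ n : ℕ, (1 + n * l) * d ≤ ‖y 0 - x 0‖ + (R + R) := by
    intro n
    have hright : Tendsto (fun i => ‖y 0 - x 0‖ + (R + R) +
        (1 - l)⁻¹ ^ n * (‖y i - x i‖ - ‖y (i + n) - x (i + n)‖)) atTop
        (𝓝 (‖y 0 - x 0‖ + (R + R))) := by
      simpa using ((hlim.sub ((tendsto_add_atTop_iff_nat n).2 hlim)).const_mul
        ((1 - l)⁻¹ ^ n)).const_add (‖y 0 - x 0‖ + (R + R))
    exact le_of_tendsto_of_tendsto' (hlim.const_mul _) hright fun i =>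
      (h.one_add_mul_norm_sub_le i n).trans (add_le_add_left (hdist i n) _)
  suffices d = 0 by rwa [this] at hlim
  by_contra hne
  have hpos : 0 < l * d := mul_pos h.pos (hd.lt_of_ne' hne)
  obtain ⟨n, hn⟩ := exists_nat_gt ((‖y 0 - x 0‖ + (R + R)) / (l * d))
  rw [div_lt_iff₀ hpos] at hn
  linarith [hlinear n]

end AveragedIteration

end AveragedIteration

section GeometricDecay

lemma summable_of_add_le_mul {b : ℕ → ℝ} (hb : ∀ k, 0 ≤ b k) {m : ℕ} {r : ℝ} (hr : r < 1)
    (h : ∀ k, b (k + m) ≤ r * b k) : Summable b := by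
  refine summable_of_sum_range_le (c := (∑ k ∈ range m, b k) / (1 - r)) hb fun N => ?_
  rw [le_div_iff₀ (sub_pos.2 hr)]
  have hshift : ∑ k ∈ range N, b (m + k) ≤ r * ∑ k ∈ range N, b k := by
    rw [mul_sum]
    exact sum_le_sum fun k _ => add_comm m k ▸ h k
  have hmono : ∑ k ∈ range N, b k ≤ ∑ k ∈ range (m + N), b k :=
    sum_le_sum_of_subset_of_nonneg (range_mono (Nat.le_add_left N m)) fun k _ _ => hb k
  rw [sum_range_add] at hmono
  linarith

lemma summable_norm_pow_mul_of_tendsto_zero {R : Type*} [SeminormedRing R] {a b g : R}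
    (hab : Commute a b) (hb : b * g * b = b) (h : Tendsto (fun t => a ^ t * b) atTop (𝓝 0)) :
    Summable fun t => ‖a ^ t * b‖ := by
  have hg : Tendsto (fun t => ‖a ^ t * b * g‖) atTop (𝓝 0) := by
    simpa using (h.mul_const g).norm
  obtain ⟨m, hm⟩ := (hg.eventually_lt_const (one_half_pos (α := ℝ))).exists
  refine summable_of_add_le_mul (fun _ => norm_nonneg _) one_half_lt_one (m := m) fun k => ?_
  have hfactor : a ^ (k + m) * b = a ^ m * b * g * (a ^ k * b) := by
    rw [add_comm, pow_add, mul_assoc, (hab.pow_left k).eq, ← mul_assoc _ b]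
    nth_rewrite 1 [← hb]
    simp only [mul_assoc]
  calc ‖a ^ (k + m) * b‖ ≤ ‖a ^ m * b * g‖ * ‖a ^ k * b‖ := hfactor ▸ norm_mul_le _ _
    _ ≤ 1 / 2 * ‖a ^ k * b‖ := mul_le_mul_of_nonneg_right hm.le (norm_nonneg _)

lemma exists_comp_comp_eq_self {k V W : Type*} [DivisionRing k] [AddCommGroup V] [Module k V]
    [AddCommGroup W] [Module k W] (f : V →ₗ[k] W) : ∃ g : W →ₗ[k] V, f ∘ₗ g ∘ₗ f = f := by
  obtain ⟨s, hs⟩ := f.rangeRestrict.exists_rightInverse_of_surjective f.range_rangeRestrict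
  obtain ⟨g, hg⟩ := s.exists_extend
  refine ⟨g, ?_⟩
  have hgf : g ∘ₗ f = s ∘ₗ f.rangeRestrict := by rw [← hg]; rfl
  calc f ∘ₗ g ∘ₗ f = (LinearMap.range f).subtype ∘ₗ (f.rangeRestrict ∘ₗ s) ∘ₗ f.rangeRestrict := by
        rw [hgf]; rfl
    _ = f := by rw [hs]; rfl

lemma exists_mul_mul_eq_self {k ι : Type*} [Field k] [Fintype ι] (M : Matrix ι ι k) :
    ∃ G, M * G * M = M := by
  classical
  obtain ⟨g, hg⟩ := exists_comp_comp_eq_self M.toLin'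
  refine ⟨LinearMap.toMatrix' g, Matrix.toLin'.injective ?_⟩
  rw [Matrix.toLin'_mul, Matrix.toLin'_mul, Matrix.toLin'_toMatrix', LinearMap.comp_assoc, hg]

end GeometricDecay

section RowStochastic

variable {ι : Type*} [Fintype ι] [DecidableEq ι] {A : Matrix ι ι ℝ}

lemma norm_le_one_of_mem_rowStochastic (hA : A ∈ rowStochastic ℝ ι) : ‖A‖ ≤ 1 := by
  rw [Matrix.linfty_opNorm_def, NNReal.coe_le_one]
  refine Finset.sup_le fun i _ => ?_
  rw [← NNReal.coe_le_coe, NNReal.coe_sum, NNReal.coe_one, ← sum_row_of_mem_rowStochastic hA i]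
  exact (sum_congr rfl fun j _ => Real.norm_of_nonneg (nonneg_of_mem_rowStochastic hA)).le

lemma norm_mulVec_le_of_mem_rowStochastic (hA : A ∈ rowStochastic ℝ ι) (v : ι → ℝ) :
    ‖A *ᵥ v‖ ≤ ‖v‖ :=
  (linfty_opNorm_mulVec A v).trans
    (mul_le_of_le_one_left (norm_nonneg v) (norm_le_one_of_mem_rowStochastic hA))

lemma exists_eq_smul_one_add_smul (hA : A ∈ rowStochastic ℝ ι) (hdiag : ∀ i, 0 < A i i) :
    ∃ l : ℝ, 0 < l ∧ l < 1 ∧ ∃ P ∈ rowStochastic ℝ ι, A = (1 - l) • 1 + l • P := by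
  obtain ⟨δ, ⟨hδ1, hδA⟩, hδ0⟩ : ∃ δ : ℝ, (δ < 1 ∧ ∀ i, δ < A i i) ∧ 0 < δ :=
    ((((eventually_lt_nhds one_pos).and (eventually_all.2 fun i =>
      eventually_lt_nhds (hdiag i))).filter_mono nhdsWithin_le_nhds).and
        (self_mem_nhdsWithin (s := Set.Ioi (0 : ℝ)))).exists
  have hl : 0 < 1 - δ := sub_pos.2 hδ1
  refine ⟨1 - δ, hl, by linarith, (1 - δ)⁻¹ • (A - δ • 1), ?_, ?_⟩
  · refine mem_rowStochastic.2 ⟨fun i j => mul_nonneg (inv_nonneg.2 hl.le) ?_, ?_⟩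
    · rcases eq_or_ne i j with rfl | hij
      · simpa using (hδA i).le
      · simpa [hij] using nonneg_of_mem_rowStochastic hA
    · rw [smul_mulVec, sub_mulVec, smul_mulVec, one_mulVec, one_vecMul_of_mem_rowStochastic hA]
      ext i
      simp [hl.ne']
  · rw [smul_inv_smul₀ hl.ne', sub_sub_cancel, add_sub_cancel]

lemma tendsto_pow_mul_sub_one (hA : A ∈ rowStochastic ℝ ι) (hdiag : ∀ i, 0 < A i i) :
    Tendsto (fun t => A ^ t * (A - 1)) atTop (𝓝 0) := by
  obtain ⟨l, hl0, hl1, P, hP, hAP⟩ := exists_eq_smul_one_add_smul hA hdiag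
  have hiter : AveragedIteration l (fun t => A ^ t) (fun t => P * A ^ t) :=
    { pos := hl0
      lt_one := hl1
      succ_eq := fun t => by
        rw [pow_succ']
        nth_rewrite 1 [hAP]
        rw [add_mul, smul_mul_assoc, smul_mul_assoc, one_mul]
      norm_sub_le := fun t => by
        rw [← mul_sub]
        exact (norm_mul_le _ _).trans
          (mul_le_of_le_one_left (norm_nonneg _) (norm_le_one_of_mem_rowStochastic hP)) }
  have hstep : ∀ t, ‖A ^ t * (A - 1)‖ = l * ‖P * A ^ t - A ^ t‖ := fun t => by
    rw [← hiter.norm_succ_sub_self, mul_sub, mul_one, pow_succ]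
  have hlim := hiter.tendsto_norm_sub fun t => norm_le_one_of_mem_rowStochastic (pow_mem hA t)
  refine tendsto_zero_iff_norm_tendsto_zero.2 ?_
  simpa only [hstep, mul_zero] using hlim.const_mul l

lemma summable_norm_pow_mul_sub_one (hA : A ∈ rowStochastic ℝ ι) (hdiag : ∀ i, 0 < A i i) :
    Summable fun t => ‖A ^ t * (A - 1)‖ := by
  obtain ⟨G, hG⟩ := exists_mul_mul_eq_self (A - 1)
  exact summable_norm_pow_mul_of_tendsto_zero ((Commute.refl A).sub_right (Commute.one_right A)) hG
    (tendsto_pow_mul_sub_one hA hdiag)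

end RowStochastic

section Boundedness

variable {ι : Type*} [Fintype ι] [DecidableEq ι]

lemma eq_pow_mulVec_add_sum {R : Type*} [Semiring R] {A : Matrix ι ι R} {b x : ℕ → ι → R}
    (hx : ∀ t, x (t + 1) = A *ᵥ x t + b t) (t : ℕ) :
    x t = A ^ t *ᵥ x 0 + ∑ k ∈ range t, A ^ k *ᵥ b (t - (k + 1)) := by
  induction t with
  | zero => simp
  | succ t ih =>
    have hshift : A *ᵥ ∑ k ∈ range t, A ^ k *ᵥ b (t - (k + 1)) =
        ∑ k ∈ range t, A ^ (k + 1) *ᵥ b (t - (k + 1)) := by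
      simp only [mulVec_sum, mulVec_mulVec, ← pow_succ']
    rw [sum_range_succ']
    simp only [Nat.add_sub_add_right, pow_zero, one_mulVec, Nat.sub_zero]
    rw [hx, ← hshift, pow_succ', ← mulVec_mulVec, ← add_assoc, ← mulVec_add, ← ih]

/-- Abel summation, so that the input enters only through its partial sums. -/
lemma eq_pow_mulVec_add_sum_add_sum {R : Type*} [Ring R] {A : Matrix ι ι R} {b x : ℕ → ι → R}
    (hx : ∀ t, x (t + 1) = A *ᵥ x t + b t) (t : ℕ) :
    x t = A ^ t *ᵥ x 0 + ∑ k ∈ range t, b k +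
      ∑ k ∈ range t, (A ^ k * (A - 1)) *ᵥ ∑ j ∈ range (t - (k + 1)), b j := by
  have hrec : ∀ t, x (t + 1) - ∑ k ∈ range (t + 1), b k =
      A *ᵥ (x t - ∑ k ∈ range t, b k) + (A - 1) *ᵥ ∑ k ∈ range t, b k := by
    intro t
    rw [hx, sum_range_succ, mulVec_sub, sub_mulVec, one_mulVec]
    abel
  have hsolution := eq_pow_mulVec_add_sum (x := fun t => x t - ∑ k ∈ range t, b k) hrec t
  simp only [mulVec_mulVec, range_zero, sum_empty, sub_zero] at hsolution
  rw [sub_eq_iff_eq_add.1 hsolution]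
  abel

theorem norm_le_of_norm_sum_le {A : Matrix ι ι ℝ} (hA : A ∈ rowStochastic ℝ ι)
    (hdiag : ∀ i, 0 < A i i) {b x : ℕ → ι → ℝ} {Y : ℝ} (hb : ∀ t, ‖∑ k ∈ range t, b k‖ ≤ Y)
    (hx : ∀ t, x (t + 1) = A *ᵥ x t + b t) (t : ℕ) :
    ‖x t‖ ≤ ‖x 0‖ + Y + (∑' k, ‖A ^ k * (A - 1)‖) * Y := by
  have hY : 0 ≤ Y := (norm_nonneg _).trans (hb 0)
  rw [eq_pow_mulVec_add_sum_add_sum hx t]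
  refine norm_add₃_le.trans (add_le_add_three
    (norm_mulVec_le_of_mem_rowStochastic (pow_mem hA t) _) (hb t) ?_)
  calc ‖∑ k ∈ range t, (A ^ k * (A - 1)) *ᵥ ∑ j ∈ range (t - (k + 1)), b j‖
      ≤ ∑ k ∈ range t, ‖A ^ k * (A - 1)‖ * Y := norm_sum_le_of_le _ fun k _ =>
        (linfty_opNorm_mulVec _ _).trans (mul_le_mul_of_nonneg_left (hb _) (norm_nonneg _))
    _ ≤ (∑' k, ‖A ^ k * (A - 1)‖) * Y := by
        rw [← sum_mul]
        gcongr
        exact (summable_norm_pow_mul_sub_one hA hdiag).sum_le_tsum _ fun _ _ => norm_nonneg _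

end Boundedness

section Synchronization

lemma exists_factorsThrough_le_le_add {ι κ : Type*} {c : ι → κ} {v : ι → ℝ} {D : ℝ}
    (hv : ∀ i j, c i = c j → v i - v j ≤ D) :
    ∃ w : ι → ℝ, w.FactorsThrough c ∧ ∀ i, w i ≤ v i ∧ v i ≤ w i + D := by
  refine ⟨fun i => ⨅ j : {j // c j = c i}, v j,
    fun _ _ => congrArg fun a => ⨅ j : {j // c j = a}, v j,
    fun i => ⟨ciInf_le ⟨v i - D, ?_⟩ (⟨i, rfl⟩ : {j // c j = c i}), ?_⟩⟩
  · rintro _ ⟨⟨j, hj⟩, rfl⟩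
    exact sub_le_comm.1 (hv i j hj.symm)
  · have : Nonempty {j // c j = c i} := ⟨⟨i, rfl⟩⟩
    exact sub_le_iff_le_add.1 (le_ciInf fun j => sub_le_comm.1 (hv i j j.2.symm))

variable {ι κ : Type*} {c : ι → κ}

/-- In the graph of `A`, with an edge from `j` to `i` when `0 < A i j`, any two vertices of the same
fibre of `c` are reachable from a common vertex. This pairwise form of having cluster-spanning-trees
is what makes rows of powers of `A` overlap. -/
def HaveCommonAncestors (A : Matrix ι ι ℝ) (c : ι → κ) : Prop :=
  ∀ i j, c i = c j → ∃ v, Relation.ReflTransGen (fun j i => 0 < A i j) v i ∧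
    Relation.ReflTransGen (fun j i => 0 < A i j) v j

variable [Fintype ι] {A B : Matrix ι ι ℝ}

/-- The clusters being the fibres of `c`, `A` maps cluster-constant vectors to cluster-constant
vectors. This is inter-cluster common influence, in a form stable under products. -/
def PreservesClusters (A : Matrix ι ι ℝ) (c : ι → κ) : Prop :=
  ∀ ⦃v : ι → ℝ⦄, v.FactorsThrough c → (A *ᵥ v).FactorsThrough c

variable [DecidableEq ι]

namespace PreservesClusters

lemma pow (h : PreservesClusters A c) (t : ℕ) : PreservesClusters (A ^ t) c := by
  induction t with
  | zero => simp [PreservesClusters]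
  | succ t ih =>
    intro v hv
    rw [pow_succ', ← mulVec_mulVec]
    exact h (ih hv)

/-- Hajnal's inequality: the common part `min (B i k) (B j k)` of two rows of the same cluster
does not contribute to the difference. -/
lemma mulVec_sub_mulVec_le (h : PreservesClusters B c) (hB : B ∈ rowStochastic ℝ ι) {v : ι → ℝ}
    {D : ℝ} (hv : ∀ i j, c i = c j → v i - v j ≤ D) {i j : ι} (hij : c i = c j) :
    (B *ᵥ v) i - (B *ᵥ v) j ≤ (1 - ∑ k, min (B i k) (B j k)) * D := by
  obtain ⟨w, hw, hwv⟩ := exists_factorsThrough_le_le_add hv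
  have hcancel : (B *ᵥ v) i - (B *ᵥ v) j = (B *ᵥ (v - w)) i - (B *ᵥ (v - w)) j := by
    rw [mulVec_sub, Pi.sub_apply, Pi.sub_apply, h hw hij, sub_sub_sub_cancel_right]
  calc (B *ᵥ v) i - (B *ᵥ v) j = ∑ k, (B i k - B j k) * (v k - w k) := by
        rw [hcancel]
        simp only [mulVec, dotProduct, Pi.sub_apply, sub_mul, sum_sub_distrib]
    _ ≤ ∑ k, (B i k - min (B i k) (B j k)) * D := by
        refine sum_le_sum fun k _ => mul_le_mul ?_ ?_ ?_ ?_
        · exact sub_le_sub_left (min_le_right _ _) _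
        · exact sub_le_iff_le_add'.2 (hwv k).2
        · exact sub_nonneg.2 (hwv k).1
        · exact sub_nonneg.2 (min_le_left _ _)
    _ = (1 - ∑ k, min (B i k) (B j k)) * D := by
        rw [← sum_mul, sum_sub_distrib, sum_row_of_mem_rowStochastic hB]

lemma pow_mulVec_sub_pow_mulVec_le (h : PreservesClusters B c) (hB : B ∈ rowStochastic ℝ ι)
    {ε : ℝ} (hε : ∀ i j, c i = c j → ε ≤ ∑ k, min (B i k) (B j k)) {v : ι → ℝ} {D : ℝ}
    (hv : ∀ i j, c i = c j → v i - v j ≤ D) (t : ℕ) {i j : ι} (hij : c i = c j) :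
    (B ^ t *ᵥ v) i - (B ^ t *ᵥ v) j ≤ (1 - ε) ^ t * D := by
  induction t generalizing i j with
  | zero => simpa using hv i j hij
  | succ t ih =>
    have hnonneg : 0 ≤ (1 - ε) ^ t * D := by simpa using ih (rfl : c i = c i)
    rw [pow_succ', ← mulVec_mulVec]
    calc _ ≤ (1 - ∑ k, min (B i k) (B j k)) * ((1 - ε) ^ t * D) :=
          h.mulVec_sub_mulVec_le hB (fun _ _ => ih) hij
      _ ≤ (1 - ε) * ((1 - ε) ^ t * D) := by
          gcongr
          exact hε i j hij
      _ = (1 - ε) ^ (t + 1) * D := by ring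

end PreservesClusters

lemma eventually_pow_apply_pos_of_reflTransGen (hA : ∀ i j, 0 ≤ A i j) (hdiag : ∀ i, 0 < A i i)
    {v i : ι} (h : Relation.ReflTransGen (fun j i => 0 < A i j) v i) :
    ∀ᶠ t in atTop, 0 < (A ^ t) i v := by
  have hstep : ∀ {t i j}, 0 < A i j → 0 < (A ^ t) j v → 0 < (A ^ (t + 1)) i v := by
    intro t i j hij hj
    rw [pow_succ', mul_apply]
    exact sum_pos' (fun k _ => mul_nonneg (hA i k) (pow_apply_nonneg hA t k v))
      ⟨j, mem_univ j, mul_pos hij hj⟩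
  induction h with
  | refl =>
    refine Eventually.of_forall fun t => ?_
    induction t with
    | zero => simp
    | succ t ih => exact hstep (hdiag v) ih
  | tail _ hij ih =>
    rw [← map_add_atTop_eq_nat 1, eventually_map]
    exact ih.mono fun t => hstep hij

lemma exists_forall_le_sum_min_pow (hA : A ∈ rowStochastic ℝ ι) (hdiag : ∀ i, 0 < A i i)
    (hspan : HaveCommonAncestors A c) :
    ∃ m ≠ 0, ∃ ε > 0, ∀ i j, c i = c j → ε ≤ ∑ k, min ((A ^ m) i k) ((A ^ m) j k) := by
  have hnonneg : ∀ i j, 0 ≤ A i j := fun i j => nonneg_of_mem_rowStochastic hA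
  have hoverlap : ∀ᶠ t in atTop, ∀ i j, c i = c j →
      0 < ∑ k, min ((A ^ t) i k) ((A ^ t) j k) := by
    refine eventually_all.2 fun i => eventually_all.2 fun j => eventually_imp_distrib_left.2 ?_
    intro hij
    obtain ⟨v, hvi, hvj⟩ := hspan i j hij
    filter_upwards [eventually_pow_apply_pos_of_reflTransGen hnonneg hdiag hvi,
      eventually_pow_apply_pos_of_reflTransGen hnonneg hdiag hvj] with t hti htj
    exact sum_pos' (fun k _ => le_min (pow_apply_nonneg hnonneg t i k)
      (pow_apply_nonneg hnonneg t j k)) ⟨v, mem_univ v, lt_min hti htj⟩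
  obtain ⟨m, hm, hm0⟩ := (hoverlap.and (eventually_ne_atTop 0)).exists
  have hsmall : ∀ᶠ ε in 𝓝[>] (0 : ℝ), ∀ i j, c i = c j →
      ε ≤ ∑ k, min ((A ^ m) i k) ((A ^ m) j k) :=
    (eventually_all.2 fun i => eventually_all.2 fun j => eventually_imp_distrib_left.2 fun hij =>
      eventually_le_nhds (hm i j hij)).filter_mono nhdsWithin_le_nhds
  obtain ⟨ε, hε, hε0⟩ := (hsmall.and self_mem_nhdsWithin).exists
  exact ⟨m, hm0, ε, hε0, hε⟩

lemma PreservesClusters.tendsto_pow_mulVec_sub (hc : PreservesClusters A c)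
    (hA : A ∈ rowStochastic ℝ ι) (hdiag : ∀ i, 0 < A i i)
    (hspan : HaveCommonAncestors A c) (v : ι → ℝ) {i j : ι} (hij : c i = c j) :
    Tendsto (fun t => (A ^ t *ᵥ v) i - (A ^ t *ᵥ v) j) atTop (𝓝 0) := by
  obtain ⟨m, hm, ε, hε0, hε⟩ := exists_forall_le_sum_min_pow hA hdiag hspan
  have hε1 : ε ≤ 1 := by
    simpa [sum_row_of_mem_rowStochastic (pow_mem hA m) i] using hε i i rfl
  have hbound : ∀ t, ∀ i j, c i = c j →
      (A ^ t *ᵥ v) i - (A ^ t *ᵥ v) j ≤ (1 - ε) ^ (t / m) * (‖v‖ + ‖v‖) := by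
    intro t i j hij
    have hremainder : ∀ i j,
        (A ^ (t % m) *ᵥ v) i - (A ^ (t % m) *ᵥ v) j ≤ ‖v‖ + ‖v‖ := by
      intro i j
      have hentry : ∀ k, |(A ^ (t % m) *ᵥ v) k| ≤ ‖v‖ := fun k =>
        (norm_le_pi_norm _ k).trans (norm_mulVec_le_of_mem_rowStochastic (pow_mem hA _) v)
      exact (le_abs_self _).trans ((abs_sub _ _).trans (add_le_add (hentry i) (hentry j)))
    have hdecomp : A ^ t *ᵥ v = (A ^ m) ^ (t / m) *ᵥ (A ^ (t % m) *ᵥ v) := by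
      rw [mulVec_mulVec, ← pow_mul, ← pow_add, Nat.div_add_mod]
    rw [hdecomp]
    exact (hc.pow m).pow_mulVec_sub_pow_mulVec_le (pow_mem hA m) hε
      (fun i j _ => hremainder i j) _ hij
  have hlim : Tendsto (fun t => (1 - ε) ^ (t / m) * (‖v‖ + ‖v‖)) atTop (𝓝 0) := by
    simpa using ((tendsto_pow_atTop_nhds_zero_of_lt_one (sub_nonneg.2 hε1)
      (sub_lt_self 1 hε0)).comp (Nat.tendsto_div_const_atTop hm)).mul_const (‖v‖ + ‖v‖)
  exact squeeze_zero_norm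
    (fun t => abs_sub_le_iff.2 ⟨hbound t i j hij, hbound t j i hij.symm⟩) hlim

lemma PreservesClusters.factorsThrough_sub_pow_mulVec (hc : PreservesClusters A c)
    {b x : ℕ → ι → ℝ} (hb : ∀ t, (b t).FactorsThrough c)
    (hx : ∀ t, x (t + 1) = A *ᵥ x t + b t) (t : ℕ) :
    (x t - A ^ t *ᵥ x 0).FactorsThrough c := by
  intro i j hij
  simp only [eq_pow_mulVec_add_sum hx t, add_sub_cancel_left, Finset.sum_apply]
  exact sum_congr rfl fun k _ => hc.pow k (hb _) hij

theorem PreservesClusters.tendsto_sub (hc : PreservesClusters A c)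
    (hA : A ∈ rowStochastic ℝ ι) (hdiag : ∀ i, 0 < A i i)
    (hspan : HaveCommonAncestors A c) {b x : ℕ → ι → ℝ} (hb : ∀ t, (b t).FactorsThrough c)
    (hx : ∀ t, x (t + 1) = A *ᵥ x t + b t) {i j : ι} (hij : c i = c j) :
    Tendsto (fun t => x t i - x t j) atTop (𝓝 0) := by
  refine (hc.tendsto_pow_mulVec_sub hA hdiag hspan (x 0) hij).congr fun t => ?_
  exact (sub_eq_sub_iff_sub_eq_sub.1 (hc.factorsThrough_sub_pow_mulVec hb hx t hij)).symm

end Synchronization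

section Clustering

variable {n K : ℕ} {C : Fin K → Finset (Fin n)} {A : Matrix (Fin n) (Fin n) ℝ}

lemma IsStochastic.mem_rowStochastic (hA : IsStochastic A) : A ∈ rowStochastic ℝ (Fin n) :=
  mem_rowStochastic_iff_sum.2 hA

lemma IsClustering.exists_forall_mem_iff (hC : IsClustering C) :
    ∃ c : Fin n → Fin K, ∀ i p, i ∈ C p ↔ c i = p := by
  choose c hc using hC.2
  refine ⟨c, fun i p => ⟨fun hi => ?_, fun hp => hp ▸ hc i⟩⟩
  by_contra hne
  exact disjoint_left.1 (hC.1 _ _ hne) (hc i) hi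

lemma InterClusterCommonInfluence.preservesClusters (hinfl : InterClusterCommonInfluence C A)
    {c : Fin n → Fin K} (hc : ∀ i p, i ∈ C p ↔ c i = p) : PreservesClusters A c := by
  intro v hv i j hij
  have hfiber : ∀ q, ({k | c k = q} : Finset (Fin n)) = C q := fun q => by ext k; simp [hc]
  change ∑ k, A i k * v k = ∑ k, A j k * v k
  rw [← sum_fiberwise _ c, ← sum_fiberwise _ c (fun k => A j k * v k)]
  refine sum_congr rfl fun q _ => ?_
  rw [hfiber]
  rcases (C q).eq_empty_or_nonempty with hq | ⟨l, hl⟩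
  · rw [hq, sum_empty, sum_empty]
  have hfactor : ∀ i, ∑ k ∈ C q, A i k * v k = (∑ k ∈ C q, A i k) * v l := fun i => by
    rw [sum_mul]
    exact sum_congr rfl fun k hk => by rw [hv (((hc k q).1 hk).trans ((hc l q).1 hl).symm)]
  rw [hfactor, hfactor, hinfl (c j) q i ((hc i _).2 hij) j ((hc j _).2 rfl)]

lemma IsClustering.norm_sum_le (hC : IsClustering C) {u : ℕ → ℝ} {α : Fin K → ℝ}
    {I : ℕ → Fin n → ℝ} (hI : ∀ t p, ∀ i ∈ C p, I t i = α p * u t) (s : Finset ℕ) :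
    ‖∑ k ∈ s, I k‖ ≤ ‖α‖ * |∑ k ∈ s, u k| := by
  refine (pi_norm_le_iff_of_nonneg (by positivity)).2 fun i => ?_
  obtain ⟨p, hp⟩ := hC.2 i
  simp only [Finset.sum_apply, hI _ p i hp, ← mul_sum, norm_mul]
  exact mul_le_mul_of_nonneg_right (norm_le_pi_norm α p) (norm_nonneg _)

end Clustering

theorem stmt6_general {n K : ℕ} {C : Fin K → Finset (Fin n)} (hC : IsClustering C)
    {A : Matrix (Fin n) (Fin n) ℝ} (hA : IsStochastic A)
    (hinfl : InterClusterCommonInfluence C A) (hspan : HasClusterSpanningTrees C A)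
    (hdiag : ∀ i, 0 < A i i) {I : ℕ → Fin n → ℝ} {Y : ℝ} (hI : ∀ t, I t ∈ SC C)
    (hsum : ∀ t, ‖∑ k ∈ range (t + 1), I k‖ ≤ Y) {x : ℕ → Fin n → ℝ}
    (hx : ∀ t, x (t + 1) = A *ᵥ x t + I t) :
    (∃ Mb : ℝ, ∀ t i, |x t i| ≤ Mb) ∧
      ∀ p, ∀ i ∈ C p, ∀ j ∈ C p, Tendsto (fun t => |x t i - x t j|) atTop (𝓝 0) := by
  obtain ⟨c, hc⟩ := hC.exists_forall_mem_iff
  have hsum' : ∀ t, ‖∑ k ∈ range t, I k‖ ≤ Y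
    | 0 => by simpa using (norm_nonneg _).trans (hsum 0)
    | t + 1 => hsum t
  have hI' : ∀ t, (I t).FactorsThrough c := fun t i j hij =>
    hI t (c j) i ((hc i _).2 hij) j ((hc j _).2 rfl)
  have hspan' : HaveCommonAncestors A c := fun i j hij =>
    (hspan (c j)).imp fun _ hv => ⟨hv i ((hc i _).2 hij), hv j ((hc j _).2 rfl)⟩
  refine ⟨⟨_, fun t i => (norm_le_pi_norm (x t) i).trans
    (norm_le_of_norm_sum_le hA.mem_rowStochastic hdiag hsum' hx t)⟩, fun p i hi j hj => ?_⟩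
  have hij : c i = c j := ((hc i p).1 hi).trans ((hc j p).1 hj).symm
  exact tendsto_zero_iff_abs_tendsto_zero _ |>.1 <|
    (hinfl.preservesClusters hc).tendsto_sub hA.mem_rowStochastic hdiag hspan' hI' hx hij

theorem stmt6 {n K : ℕ} (C : Fin K → Finset (Fin n)) (hC : IsClustering C)
    (A : Matrix (Fin n) (Fin n) ℝ) (hA : IsStochastic A)
    (hinfl : InterClusterCommonInfluence C A)
    (hspan : HasClusterSpanningTrees C A)
    (hdiag : ∀ i, 0 < A i i)
    (u : ℕ → ℝ) (Y : ℝ)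
    (hu : ∀ t, |u t| ≤ Y)
    (hsum : ∀ t, |∑ k ∈ Finset.range (t + 1), u k| ≤ Y)
    (α : Fin K → ℝ)
    (I : ℕ → Fin n → ℝ)
    (hI : ∀ t p, ∀ i ∈ C p, I t i = α p * u t)
    (x : ℕ → Fin n → ℝ)
    (hx : ∀ t, x (t + 1) = A.mulVec (x t) + I t) :
    (∃ Mb : ℝ, ∀ t i, |x t i| ≤ Mb) ∧
      ∀ p, ∀ i ∈ C p, ∀ j ∈ C p,
        Tendsto (fun t => |x t i - x t j|) atTop (𝓝 0) :=
  stmt6_general hC hA hinfl hspan hdiag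
    (fun t p i hi j hj => (hI t p i hi).trans (hI t p j hj).symm)
    (fun t => (hC.norm_sum_le hI _).trans
      (mul_le_mul_of_nonneg_left (hsum t) (norm_nonneg α))) hx
end

section
/- Let C = {C_1,…,C_K} be a clustering of {1,…,n} and let A(t), t ≥ 0, be a sequence of n×n stochastic matrices satisfying: (B1) there exists e > 0 such that for all i, j, t, either A_{ij}(t) = 0 or A_{ij}(t) ≥ e; (B2) A_{ii}(t) ≥ e for all i and t; (B3*, static inter-cluster common influence) there exists a K×K stochastic matrix B = [b_{pq}] such that Σ_{j∈C_q} A_{ij}(t) = b_{pq} for all t ≥ 0, all i ∈ C_p and all p, q. Suppose there exists an integer L > 0 such that for every t ≥ 0 the matrix Σ_{s=t}^{t+L−1} A(s) has cluster-spanning-trees w.r.t. C. Let u : ℕ → ℝ be such that both |u(t)| and |Σ_{k=0}^{t} u(k)| are bounded over t, let α_1,…,α_K ∈ ℝ, and define the input I(t) ∈ ℝ^n by I_i(t) = α_p u(t) for i ∈ C_p. Then every solution of x(t+1) = A(t) x(t) + I(t) is bounded: sup_t max_i |x_i(t)| < ∞. -/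
open Finset Filter Topology Matrix

/-!
A solution of `β (t + 1) = B β t + u t • α`, extended to be constant on each cluster, solves both
the time-varying system and the one with a single fixed matrix `f = A s`. The matrices `A t` do not
increase the sup norm, so every solution stays at bounded distance from this one, and it remains to
bound the trajectories of `y (t + 1) = f (y t) + u t • a`.

Subtracting `U t • a`, where `U` is the sequence of partial sums of `u`, turns the forcing into
`U t • (f a - a)`, which is bounded and lies in the range of `f - 1`. By Gershgorin's theorem the
positive diagonal of `f` leaves `1` as its only possible eigenvalue of modulus at least one, and
since `f` does not increase norms, no nonzero vector in the range of `f - 1` is fixed. Hence `f` has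
spectral radius less than one there, its powers have summable norms, and the bounded forcing has a
bounded response.
-/

lemma summable_norm_pow_of_spectralRadius_lt_one {R : Type*} [NormedRing R] [NormedAlgebra ℂ R]
    [CompleteSpace R] {a : R} (ha : spectralRadius ℂ a < 1) : Summable fun k => ‖a ^ k‖ := by
  obtain ⟨r, har, hr1⟩ := ENNReal.lt_iff_exists_nnreal_btwn.1 ha
  have hpow : ∀ᶠ k : ℕ in atTop, ‖a ^ k‖ ≤ (r : ℝ) ^ k := by
    have hgelfand := spectrum.pow_nnnorm_pow_one_div_tendsto_nhds_spectralRadius a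
    filter_upwards [hgelfand.eventually_lt_const har, eventually_gt_atTop 0] with k hk hk0
    rw [one_div] at hk
    have hk' := (ENNReal.rpow_inv_le_iff (Nat.cast_pos.2 hk0)).1 hk.le
    rw [ENNReal.rpow_natCast] at hk'
    exact_mod_cast hk'
  exact .of_norm_bounded_eventually_nat
    (summable_geometric_of_lt_one r.coe_nonneg (by exact_mod_cast hr1)) (by simpa using hpow)

lemma norm_sub_le_of_nonexpansive {E : Type*} [SeminormedAddCommGroup E] {F : ℕ → E → E}
    (hF : ∀ t v w, ‖F t v - F t w‖ ≤ ‖v - w‖) {w x y : ℕ → E}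
    (hx : ∀ t, x (t + 1) = F t (x t) + w t) (hy : ∀ t, y (t + 1) = F t (y t) + w t) (t : ℕ) :
    ‖x t - y t‖ ≤ ‖x 0 - y 0‖ := by
  induction t with
  | zero => rfl
  | succ t ih =>
    rw [hx, hy, add_sub_add_right_eq_sub]
    exact (hF t _ _).trans ih

lemma norm_le_of_summable_norm_pow {𝕜 V : Type*} [NontriviallyNormedField 𝕜]
    [SeminormedAddCommGroup V] [NormedSpace 𝕜 V] {S : V →L[𝕜] V} (hS : Summable fun k => ‖S ^ k‖)
    {w z : ℕ → V} {W : ℝ} (hw : ∀ t, ‖w t‖ ≤ W) (hz : ∀ t, z (t + 1) = S (z t) + w t) (t : ℕ) :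
    ‖z t‖ ≤ (∑' k, ‖S ^ k‖) * (‖z 0‖ + W) := by
  have hbound (t m : ℕ) : ‖(S ^ m) (z t)‖ ≤
      ‖S ^ (m + t)‖ * ‖z 0‖ + ∑ k ∈ range t, ‖S ^ (m + k)‖ * W := by
    induction t generalizing m with
    | zero => simpa using (S ^ m).le_opNorm (z 0)
    | succ t ih =>
      calc ‖(S ^ m) (z (t + 1))‖ = ‖(S ^ (m + 1)) (z t) + (S ^ m) (w t)‖ := by
            rw [hz, map_add, pow_succ, mul_apply_eq_comp]
        _ ≤ (‖S ^ (m + 1 + t)‖ * ‖z 0‖ + ∑ k ∈ range t, ‖S ^ (m + 1 + k)‖ * W) + ‖S ^ m‖ * W :=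
            norm_add_le_of_le (ih (m + 1)) ((S ^ m).le_opNorm_of_le (hw t))
        _ = _ := by
            simp only [sum_range_succ', add_zero, add_assoc, add_comm 1]
  have hW : 0 ≤ W := (norm_nonneg _).trans (hw 0)
  calc ‖z t‖ ≤ ‖S ^ t‖ * ‖z 0‖ + (∑ k ∈ range t, ‖S ^ k‖) * W := by
        simpa [sum_mul] using hbound t 0
    _ ≤ (∑' k, ‖S ^ k‖) * ‖z 0‖ + (∑' k, ‖S ^ k‖) * W := by
        gcongr
        · exact hS.le_tsum t fun _ _ => norm_nonneg _
        · exact hS.sum_le_tsum _ fun _ _ => norm_nonneg _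
    _ = _ := by ring

lemma disjoint_eigenspace_one_range_sub_one {𝕜 V : Type*} [RCLike 𝕜] [NormedAddCommGroup V]
    [NormedSpace 𝕜 V] {f : Module.End 𝕜 V} (hf : ∀ v, ‖f v‖ ≤ ‖v‖) :
    Disjoint (f.eigenspace 1) (LinearMap.range (f - 1)) := by
  rw [Submodule.disjoint_def]
  rintro v hv ⟨w, rfl⟩
  set v := (f - 1) w with hvw
  have hfv : f v = v := by simpa using Module.End.mem_eigenspace_iff.1 hv
  have hfw : f w = w + v := by simp [hvw]
  have horbit (k : ℕ) : (f ^ k) w = w + k • v := by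
    induction k with
    | zero => simp
    | succ k ih =>
      rw [pow_succ', Module.End.mul_apply, ih, map_add, map_nsmul, hfv, hfw]
      module
  have hpow (k : ℕ) : ‖(f ^ k) w‖ ≤ ‖w‖ := by
    induction k with
    | zero => simp
    | succ k ih => rw [pow_succ']; exact (hf _).trans ih
  have hlinear (k : ℕ) : k * ‖v‖ ≤ ‖w‖ + ‖w‖ := by
    calc k * ‖v‖ = ‖(k : 𝕜) • v‖ := by rw [norm_smul, RCLike.norm_natCast]
      _ = ‖(f ^ k) w - w‖ := by rw [horbit, add_sub_cancel_left, Nat.cast_smul_eq_nsmul]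
      _ ≤ ‖w‖ + ‖w‖ := norm_sub_le_of_le (hpow k) le_rfl
  by_contra hne
  obtain ⟨k, hk⟩ := exists_nat_gt ((‖w‖ + ‖w‖) / ‖v‖)
  exact ((div_lt_iff₀ (norm_pos_iff.2 hne)).1 hk).not_ge (hlinear k)

section Spectral

variable {V : Type*} [NormedAddCommGroup V] [NormedSpace ℂ V] [FiniteDimensional ℂ V]

lemma summable_norm_pow_of_hasEigenvalue_norm_lt_one {T : V →L[ℂ] V}
    (hT : ∀ μ, Module.End.HasEigenvalue (T : Module.End ℂ V) μ → ‖μ‖ < 1) :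
    Summable fun k => ‖T ^ k‖ := by
  have := FiniteDimensional.complete ℂ V
  refine summable_norm_pow_of_spectralRadius_lt_one ?_
  rcases (spectrum ℂ T).eq_empty_or_nonempty with hempty | hne
  · simp [spectralRadius, hempty]
  · refine spectrum.spectralRadius_lt_of_forall_lt_of_nonempty hne fun μ hμ => ?_
    rw [ContinuousLinearMap.spectrum_eq] at hμ
    exact hT μ (Module.End.hasEigenvalue_iff_mem_spectrum.2 hμ)

lemma exists_norm_le_of_forcing_range_sub_one {f : Module.End ℂ V} (hf : ∀ v, ‖f v‖ ≤ ‖v‖)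
    (hspec : ∀ μ, f.HasEigenvalue μ → μ ≠ 1 → ‖μ‖ < 1) {U : ℕ → ℂ} {Y : ℝ}
    (hU : ∀ t, ‖U t‖ ≤ Y) (a : V) {z : ℕ → V} (hz : ∀ t, z (t + 1) = f (z t) + U t • (f a - a)) :
    ∃ R, ∀ t, ‖z t‖ ≤ R := by
  have hW : ∀ v ∈ LinearMap.range (f - 1), f v ∈ LinearMap.range (f - 1) := by
    rintro _ ⟨v, rfl⟩
    exact ⟨f v, by simp⟩
  let S := LinearMap.toContinuousLinearMap (f.restrict hW)
  have hS : Summable fun k => ‖S ^ k‖ :=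
    summable_norm_pow_of_hasEigenvalue_norm_lt_one fun μ hμ => by
      have hμf : ¬Disjoint (f.eigenspace μ) (LinearMap.range (f - 1)) := fun h =>
        hμ (Module.End.eigenspace_restrict_eq_bot hW h)
      refine hspec μ (fun hbot => hμf (disjoint_bot_left.mono_left hbot.le)) ?_
      rintro rfl
      exact hμf (disjoint_eigenspace_one_range_sub_one hf)
  let b : LinearMap.range (f - 1) := ⟨f a - a, a, rfl⟩
  obtain ⟨r, hr⟩ : ∃ r : ℕ → LinearMap.range (f - 1),
      ∀ t, r (t + 1) = S (r t) + U t • b :=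
    ⟨fun t => Nat.rec 0 (fun t r => S r + U t • b) t, fun _ => rfl⟩
  have hr_le (t : ℕ) := norm_le_of_summable_norm_pow hS
    (fun t => (norm_smul_le (U t) b).trans (mul_le_mul_of_nonneg_right (hU t) (norm_nonneg b))) hr t
  have hdiff := norm_sub_le_of_nonexpansive (F := fun _ => f)
    (fun _ v w => by rw [← map_sub]; exact hf _) hz (y := fun t => (r t : V))
    (fun t => congrArg Subtype.val (hr t))
  exact ⟨_, fun t => norm_le_norm_sub_add (z t) (r t) |>.trans (add_le_add (hdiff t) (hr_le t))⟩

lemma exists_norm_le_of_sum_range_le {f : Module.End ℂ V} (hf : ∀ v, ‖f v‖ ≤ ‖v‖)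
    (hspec : ∀ μ, f.HasEigenvalue μ → μ ≠ 1 → ‖μ‖ < 1) {u : ℕ → ℂ} {Y : ℝ}
    (hu : ∀ t, ‖∑ k ∈ range t, u k‖ ≤ Y) (a : V) {y : ℕ → V}
    (hy : ∀ t, y (t + 1) = f (y t) + u t • a) : ∃ R, ∀ t, ‖y t‖ ≤ R := by
  let U (t : ℕ) : ℂ := ∑ k ∈ range t, u k
  let z (t : ℕ) : V := y t - U t • a
  have hz (t : ℕ) : z (t + 1) = f (z t) + U t • (f a - a) := by
    simp only [z, U, hy, sum_range_succ, map_sub, map_smul]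
    module
  obtain ⟨R, hR⟩ := exists_norm_le_of_forcing_range_sub_one hf hspec hu a hz
  refine ⟨R + Y * ‖a‖, fun t => ?_⟩
  calc ‖y t‖ ≤ ‖y t - U t • a‖ + ‖U t • a‖ := norm_le_norm_sub_add _ _
    _ ≤ R + Y * ‖a‖ := add_le_add (hR t)
        ((norm_smul_le _ _).trans (mul_le_mul_of_nonneg_right (hu t) (norm_nonneg a)))

end Spectral

section Matrices

variable {m n : Type*} [Fintype m] [Fintype n]

lemma norm_mulVec_le_of_sum_norm_le_one {R : Type*} [SeminormedRing R] {M : Matrix m n R}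
    (hM : ∀ i, ∑ j, ‖M i j‖ ≤ 1) (v : n → R) : ‖M *ᵥ v‖ ≤ ‖v‖ := by
  refine (pi_norm_le_iff_of_nonneg (norm_nonneg v)).2 fun i => ?_
  calc ‖∑ j, M i j * v j‖ ≤ ∑ j, ‖M i j‖ * ‖v‖ :=
        norm_sum_le_of_le _ fun j _ => norm_mul_le_of_le le_rfl (norm_le_pi_norm v j)
    _ ≤ ‖v‖ := by
        rw [← sum_mul]
        exact mul_le_of_le_one_left (norm_nonneg v) (hM i)

lemma norm_lt_one_of_norm_sub_le {μ : ℂ} {d : ℝ} (hd : 0 < d) (hμd : ‖μ - d‖ ≤ 1 - d)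
    (hμ : μ ≠ 1) : ‖μ‖ < 1 := by
  by_contra! h
  have hd1 : 0 ≤ 1 - d := (norm_nonneg _).trans hμd
  have hsq := pow_le_pow_left₀ (norm_nonneg _) hμd 2
  have hsq' := pow_le_pow_left₀ zero_le_one h 2
  simp only [Complex.sq_norm, Complex.normSq_apply, Complex.sub_re, Complex.sub_im,
    Complex.ofReal_re, Complex.ofReal_im, sub_zero] at hsq hsq'
  have hre : 1 ≤ μ.re := by nlinarith
  have him : μ.im = 0 := by nlinarith
  have hre' : μ.re ≤ 1 := by nlinarith
  exact hμ (Complex.ext (hre'.antisymm hre) him)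

lemma norm_lt_one_of_hasEigenvalue [DecidableEq n] {M : Matrix n n ℝ} (hM : ∀ i, ∑ j, |M i j| ≤ 1)
    (hdiag : ∀ i, 0 < M i i) {μ : ℂ}
    (hμ : Module.End.HasEigenvalue (toLin' (M.map Complex.ofRealHom)) μ) (hμ1 : μ ≠ 1) :
    ‖μ‖ < 1 := by
  obtain ⟨i, hi⟩ := eigenvalue_mem_ball hμ
  refine norm_lt_one_of_norm_sub_le (hdiag i) (d := M i i) ?_ hμ1
  have hrow := hM i
  rw [← add_sum_erase _ _ (mem_univ i), abs_of_pos (hdiag i)] at hrow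
  have h : ‖μ - M i i‖ ≤ ∑ j ∈ univ.erase i, |M i j| := by simpa [dist_eq_norm] using hi
  linarith

lemma exists_norm_le_of_sum_abs_le_one {M : Matrix n n ℝ} (hM : ∀ i, ∑ j, |M i j| ≤ 1)
    (hdiag : ∀ i, 0 < M i i) {u : ℕ → ℝ} {Y : ℝ} (hu : ∀ t, |∑ k ∈ range t, u k| ≤ Y) (a : n → ℝ)
    {y : ℕ → n → ℝ} (hy : ∀ t, y (t + 1) = M *ᵥ y t + u t • a) : ∃ R, ∀ t, ‖y t‖ ≤ R := by
  classical
  let toComplex (v : n → ℝ) : n → ℂ := Complex.ofRealHom ∘ v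
  obtain ⟨R, hR⟩ := exists_norm_le_of_sum_range_le
    (f := toLin' (M.map Complex.ofRealHom)) (u := fun t => (u t : ℂ))
    (y := fun t => toComplex (y t))
    (norm_mulVec_le_of_sum_norm_le_one (by simpa using hM))
    (fun μ => norm_lt_one_of_hasEigenvalue hM hdiag)
    (fun t => by simpa [← Complex.ofReal_sum] using hu t) (toComplex a) fun t => by
      ext i
      simp [toComplex, hy, ← RingHom.map_mulVec]
  exact ⟨R, fun t => by simpa [Pi.norm_def, toComplex] using hR t⟩

end Matrices

lemma mulVec_comp_of_sum_fiber_eq {m n κ l R : Type*} [Fintype n] [Fintype κ] [DecidableEq κ]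
    [NonUnitalNonAssocSemiring R] {A : Matrix m n R} {B : Matrix l κ R} {r : m → l} {c : n → κ}
    (hAB : ∀ i q, ∑ j with c j = q, A i j = B (r i) q) (v : κ → R) :
    A *ᵥ (v ∘ c) = (B *ᵥ v) ∘ r := by
  ext i
  calc ∑ j, A i j * v (c j) = ∑ q, ∑ j with c j = q, A i j * v (c j) :=
        (sum_fiberwise univ c _).symm
    _ = ∑ q, B (r i) q * v q := by
        refine sum_congr rfl fun q _ => ?_
        rw [← hAB, sum_mul]
        exact sum_congr rfl fun j hj => by rw [(mem_filter.1 hj).2]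

lemma IsClustering.existsUnique_mem {n K : ℕ} {C : Fin K → Finset (Fin n)} (hC : IsClustering C)
    (i : Fin n) : ∃! p, i ∈ C p := by
  obtain ⟨p, hp⟩ := hC.2 i
  refine ⟨p, hp, fun q hq => ?_⟩
  by_contra hqp
  exact disjoint_left.1 (hC.1 q p hqp) hq hp

lemma IsStochastic.sum_abs_eq_one {n : ℕ} {A : Matrix (Fin n) (Fin n) ℝ} (hA : IsStochastic A)
    (i : Fin n) : ∑ j, |A i j| = 1 := by
  simp only [abs_of_nonneg (hA.1 i _), hA.2 i]

theorem stmt15_general {ι κ : Type*} [Fintype ι] [Finite κ] (C : κ → Finset ι)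
    (hC : ∀ i, ∃! p, i ∈ C p)
    (A : ℕ → Matrix ι ι ℝ)
    (hA : ∀ t i, ∑ j, |A t i j| ≤ 1)
    (s : ℕ) (hdiag : ∀ i, 0 < A s i i)
    (B : Matrix κ κ ℝ)
    (hB : ∀ t p q, ∀ i ∈ C p, ∑ j ∈ C q, A t i j = B p q)
    (u : ℕ → ℝ) (Y : ℝ)
    (hsum : ∀ t, |∑ k ∈ range (t + 1), u k| ≤ Y)
    (α : κ → ℝ)
    (I : ℕ → ι → ℝ)
    (hI : ∀ t p, ∀ i ∈ C p, I t i = α p * u t)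
    (x : ℕ → ι → ℝ)
    (hx : ∀ t, x (t + 1) = A t *ᵥ x t + I t) :
    ∃ Mb : ℝ, ∀ t i, |x t i| ≤ Mb := by
  classical
  have := Fintype.ofFinite κ
  choose c hc hc_unique using hC
  have hfiber (q : κ) : C q = ({j | c j = q} : Finset ι) := by
    ext j
    simpa using ⟨fun hj => (hc_unique j q hj).symm, fun hj => hj ▸ hc j⟩
  have hA_lump (t : ℕ) (v : κ → ℝ) : A t *ᵥ (v ∘ c) = (B *ᵥ v) ∘ c :=
    mulVec_comp_of_sum_fiber_eq (fun i q => hfiber q ▸ hB t (c i) q i (hc i)) v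
  have hI_lump (t : ℕ) : I t = u t • (α ∘ c) :=
    funext fun i => (hI t (c i) i (hc i)).trans (mul_comm _ _)
  have hsum' : ∀ t, |∑ k ∈ range t, u k| ≤ Y
    | 0 => by simpa using (abs_nonneg _).trans (hsum 0)
    | t + 1 => hsum t
  obtain ⟨β, hβ⟩ : ∃ β : ℕ → κ → ℝ, ∀ t, β (t + 1) = B *ᵥ β t + u t • α :=
    ⟨fun t => Nat.rec 0 (fun t b => B *ᵥ b + u t • α) t, fun _ => rfl⟩
  have hy (τ t : ℕ) : β (t + 1) ∘ c = A τ *ᵥ (β t ∘ c) + u t • (α ∘ c) := by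
    rw [hA_lump, hβ]; rfl
  obtain ⟨R, hR⟩ := exists_norm_le_of_sum_abs_le_one (hA s) hdiag hsum' (α ∘ c)
    (y := fun t => β t ∘ c) (hy s)
  have hdist := norm_sub_le_of_nonexpansive (F := fun t v => A t *ᵥ v)
    (fun t v w => by rw [← mulVec_sub]; exact norm_mulVec_le_of_sum_norm_le_one (hA t) _)
    (fun t => hI_lump t ▸ hx t) (y := fun t => β t ∘ c) (fun t => hy t t)
  exact ⟨_, fun t i => (norm_le_pi_norm (x t) i).trans
    ((norm_le_norm_sub_add _ _).trans (add_le_add (hdist t) (hR t)))⟩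

theorem stmt15 {n K : ℕ} (C : Fin K → Finset (Fin n)) (hC : IsClustering C)
    (A : ℕ → Matrix (Fin n) (Fin n) ℝ)
    (hstoch : ∀ t, IsStochastic (A t))
    (e : ℝ) (he : 0 < e)
    (hB1 : ∀ t i j, A t i j = 0 ∨ e ≤ A t i j)
    (hB2 : ∀ t i, e ≤ A t i i)
    (B : Matrix (Fin K) (Fin K) ℝ) (hBstoch : IsStochastic B)
    (hB3 : ∀ t p q, ∀ i ∈ C p, ∑ j ∈ C q, A t i j = B p q)
    (L : ℕ) (hL : 0 < L)
    (hspan : ∀ t, HasClusterSpanningTrees C (∑ s ∈ Finset.range L, A (t + s)))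
    (u : ℕ → ℝ) (Y : ℝ)
    (hu : ∀ t, |u t| ≤ Y)
    (hsum : ∀ t, |∑ k ∈ Finset.range (t + 1), u k| ≤ Y)
    (α : Fin K → ℝ)
    (I : ℕ → Fin n → ℝ)
    (hI : ∀ t p, ∀ i ∈ C p, I t i = α p * u t)
    (x : ℕ → Fin n → ℝ)
    (hx : ∀ t, x (t + 1) = (A t).mulVec (x t) + I t) :
    ∃ Mb : ℝ, ∀ t i, |x t i| ≤ Mb :=
  stmt15_general C hC.existsUnique_mem A (fun t i => ((hstoch t).sum_abs_eq_one i).le) 0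
    (fun i => he.trans_le (hB2 0 i)) B hB3 u Y hsum α I hI x hx
end

section
/- Let C = {C_1,…,C_K} be a clustering of {1,…,n} and let A(t), t ≥ 0, be a sequence of n×n stochastic matrices satisfying: (B1) there exists e > 0 such that for all i, j, t, either A_{ij}(t) = 0 or A_{ij}(t) ≥ e; (B2) A_{ii}(t) ≥ e for all i and t; (B3*, static inter-cluster common influence) there exists a K×K stochastic matrix B = [b_{pq}] such that Σ_{j∈C_q} A_{ij}(t) = b_{pq} for all t ≥ 0, all i ∈ C_p and all p, q. Suppose there exists an integer L > 0 such that for every t ≥ 0 the matrix Σ_{s=t}^{t+L−1} A(s) has cluster-spanning-trees w.r.t. C. Let T ≥ 1, let u : ℕ → ℝ be T-periodic (u(t+T) = u(t)) with Σ_{k=0}^{T−1} u(k) = 0, let α_1,…,α_K ∈ ℝ, and define the input I(t) ∈ ℝ^n by I_i(t) = α_p u(t) for i ∈ C_p. Then for every initial condition x(0) ∈ ℝ^n, the solution of x(t+1) = A(t) x(t) + I(t) converges to a T-periodic, intra-cluster identical trajectory: there exist scalar functions v_1,…,v_K : ℕ → ℝ with v_p(t+T) = v_p(t) for all t, such that |x_j(t)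 − v_p(t)| → 0 as t → ∞ for every j ∈ C_p and every p = 1,…,K. -/
open Finset Filter Topology Matrix

/-!
By common influence every `A t` preserves the vectors that are constant on clusters and acts on
them as `B`. The inputs therefore do not affect the intra-cluster diameter of `x t`, and the
spanning trees make long products of the `A t` contract it; so the diameter is summable. Two of
the matrices differ at `x t` by at most the diameter, hence `x` solves the autonomous recursion
`x (t + 1) = A 0 *ᵥ x t + I t` up to a summable defect.

Having a positive diagonal, `A 0` is an average of the identity and a nonexpansive map, so the
increments of its orbits tend to `0` (Ishikawa; Edelstein and O'Brien). In finite dimension this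
makes its powers converge, and `A 0 ^ T - 1` has the same range as `A 0 - 1`. Forcing whose sum
over a period lies in that range thus admits a periodic solution, and a summable defect only
shifts the limiting trajectory by a constant.
-/

section Algebra

variable {R E : Type*} [Ring R] [AddCommGroup E] [Module R E]

lemma mem_ker_sub_one_iff {f : Module.End R E} {v : E} : v ∈ LinearMap.ker (f - 1) ↔ f v = v := by
  rw [LinearMap.mem_ker, LinearMap.sub_apply, Module.End.one_apply, sub_eq_zero]

lemma pow_apply_eq_of_apply_eq {R M : Type*} [Semiring R] [AddCommMonoid M] [Module R M]
    {f : Module.End R M} {v : M} (hv : f v = v) (m : ℕ) : (f ^ m) v = v := by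
  rw [Module.End.pow_apply, Function.iterate_fixed hv]

lemma eq_pow_add_sum_pow_defect (f : Module.End R E) (z : ℕ → E) (t : ℕ) :
    z t = (f ^ t) (z 0) + ∑ s ∈ range t, (f ^ (t - 1 - s)) (z (s + 1) - f (z s)) := by
  have htel : ∀ s ∈ range t, (f ^ (t - 1 - s)) (z (s + 1) - f (z s)) =
      (f ^ (t - (s + 1))) (z (s + 1)) - (f ^ (t - s)) (z s) := by
    intro s hs
    have hst : t - s = t - 1 - s + 1 := by have := mem_range.mp hs; omega
    rw [map_sub, hst, pow_succ, Module.End.mul_apply, Nat.sub_add_eq, Nat.sub_right_comm]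
  rw [sum_congr rfl htel, sum_range_sub fun s => (f ^ (t - s)) (z s)]
  simp

/-- The solution of the affine recursion `y (t + 1) = f (y t) + g t` started at `y₀`. -/
def forcedOrbit (f : Module.End R E) (g : ℕ → E) (y₀ : E) : ℕ → E
  | 0 => y₀
  | t + 1 => f (forcedOrbit f g y₀ t) + g t

lemma forcedOrbit_eq_pow_add (f : Module.End R E) (g : ℕ → E) (y₀ : E) (t : ℕ) :
    forcedOrbit f g y₀ t = (f ^ t) y₀ + forcedOrbit f g 0 t := by
  induction t with
  | zero => simp [forcedOrbit]
  | succ t ih => rw [forcedOrbit, forcedOrbit, ih, map_add, pow_succ', Module.End.mul_apply,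
      add_assoc]

lemma forcedOrbit_zero_sub_sum_mem_range (f : Module.End R E) (g : ℕ → E) (t : ℕ) :
    forcedOrbit f g 0 t - ∑ k ∈ range t, g k ∈ LinearMap.range (f - 1) := by
  induction t with
  | zero => simp [forcedOrbit]
  | succ t ih =>
    have hstep : forcedOrbit f g 0 (t + 1) - ∑ k ∈ range (t + 1), g k =
        (f - 1) (forcedOrbit f g 0 t) + (forcedOrbit f g 0 t - ∑ k ∈ range t, g k) := by
      rw [forcedOrbit, sum_range_succ, LinearMap.sub_apply, Module.End.one_apply]
      abel
    rw [hstep]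
    exact add_mem (LinearMap.mem_range_self _ _) ih

lemma forcedOrbit_periodic {f : Module.End R E} {g : ℕ → E} {y₀ : E} {T : ℕ}
    (hg : Function.Periodic g T) (hy₀ : forcedOrbit f g y₀ T = y₀) :
    Function.Periodic (forcedOrbit f g y₀) T := by
  intro t
  induction t with
  | zero => rwa [zero_add]
  | succ t ih => rw [add_right_comm, forcedOrbit, forcedOrbit, ih, hg]

end Algebra

section AsymptoticRegularity

variable {𝕜 E : Type*} [NormedField 𝕜] [NormedAddCommGroup E] [NormedSpace 𝕜 E]

/-- Asymptotic regularity in the sense of Browder and Petryshyn: the increments of every orbit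
tend to `0`. -/
def IsAsymptoticallyRegular (f : Module.End 𝕜 E) : Prop :=
  ∀ v, Tendsto (fun m : ℕ => (f ^ m) (f v - v)) atTop (𝓝 0)

namespace IsAsymptoticallyRegular

variable {f : Module.End 𝕜 E}

lemma disjoint_ker_range (hf : IsAsymptoticallyRegular f) :
    Disjoint (LinearMap.ker (f - 1)) (LinearMap.range (f - 1)) := by
  rw [Submodule.disjoint_def]
  rintro _ hfix ⟨b, rfl⟩
  have hconst : Tendsto (fun m : ℕ => (f ^ m) ((f - 1) b)) atTop (𝓝 0) := hf b
  simp only [pow_apply_eq_of_apply_eq (mem_ker_sub_one_iff.mp hfix)] at hconst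
  exact tendsto_nhds_unique tendsto_const_nhds hconst

lemma ker_pow_sub_one (hf : IsAsymptoticallyRegular f) {T : ℕ} (hT : T ≠ 0) :
    LinearMap.ker (f ^ T - 1) = LinearMap.ker (f - 1) := by
  ext v
  rw [mem_ker_sub_one_iff, mem_ker_sub_one_iff]
  refine ⟨fun hv => ?_, fun hv => pow_apply_eq_of_apply_eq hv T⟩
  have hfix : (f ^ T) (f v - v) = f v - v := by
    rw [map_sub, ← Module.End.mul_apply, (Commute.pow_self f T).eq, Module.End.mul_apply, hv]
  have hlim : Tendsto (fun m : ℕ => (f ^ (T * m)) (f v - v)) atTop (𝓝 0) :=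
    (hf v).comp (tendsto_id.const_mul_atTop' (Nat.pos_of_ne_zero hT))
  simp only [pow_mul, pow_apply_eq_of_apply_eq hfix] at hlim
  exact sub_eq_zero.mp (tendsto_nhds_unique tendsto_const_nhds hlim)

variable [FiniteDimensional 𝕜 E]

lemma isCompl_ker_range (hf : IsAsymptoticallyRegular f) :
    IsCompl (LinearMap.ker (f - 1)) (LinearMap.range (f - 1)) := by
  rw [Submodule.isCompl_iff_disjoint _ _
    (by rw [add_comm, LinearMap.finrank_range_add_finrank_ker])]
  exact hf.disjoint_ker_range

lemma exists_tendsto_pow (hf : IsAsymptoticallyRegular f) (v : E) :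
    ∃ a, Tendsto (fun m : ℕ => (f ^ m) v) atTop (𝓝 a) := by
  obtain ⟨a, ha, _, ⟨b, rfl⟩, rfl⟩ := Submodule.mem_sup.mp
    (hf.isCompl_ker_range.sup_eq_top ▸ Submodule.mem_top (x := v))
  refine ⟨a, ?_⟩
  simpa [pow_apply_eq_of_apply_eq (mem_ker_sub_one_iff.mp ha)] using
    (tendsto_const_nhds (x := a)).add (hf b)

lemma range_pow_sub_one (hf : IsAsymptoticallyRegular f) {T : ℕ} (hT : T ≠ 0) :
    LinearMap.range (f ^ T - 1) = LinearMap.range (f - 1) := by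
  refine Submodule.eq_of_le_of_finrank_eq ?_ ?_
  · rw [← mul_geom_sum f T]
    exact LinearMap.range_comp_le_range _ _
  · have hpow := LinearMap.finrank_range_add_finrank_ker (f ^ T - 1)
    have hone := LinearMap.finrank_range_add_finrank_ker (f - 1)
    rw [hf.ker_pow_sub_one hT] at hpow
    omega

/-- Fredholm alternative: the period map `y₀ ↦ f ^ T y₀ + forcedOrbit f g 0 T` has a fixed point
once its translation part lies in `range (f ^ T - 1) = range (f - 1)`. -/
lemma exists_periodic_forcedOrbit (hf : IsAsymptoticallyRegular f) {T : ℕ} (hT : T ≠ 0)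
    {g : ℕ → E} (hg : Function.Periodic g T)
    (hsum : ∑ k ∈ range T, g k ∈ LinearMap.range (f - 1)) :
    ∃ y₀, Function.Periodic (forcedOrbit f g y₀) T := by
  have hmem : forcedOrbit f g 0 T ∈ LinearMap.range (f ^ T - 1) := by
    rw [hf.range_pow_sub_one hT]
    simpa using add_mem (forcedOrbit_zero_sub_sum_mem_range f g T) hsum
  obtain ⟨b, hb⟩ := hmem
  refine ⟨-b, forcedOrbit_periodic hg ?_⟩
  rw [forcedOrbit_eq_pow_add, ← hb, map_neg, LinearMap.sub_apply, Module.End.one_apply]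
  abel

end IsAsymptoticallyRegular

end AsymptoticRegularity

section PerturbedRecursion

variable {𝕜 E : Type*} [NormedField 𝕜] [NormedAddCommGroup E] [NormedSpace 𝕜 E]
  {f : Module.End 𝕜 E}

lemma norm_pow_apply_le (hf : ∀ v, ‖f v‖ ≤ ‖v‖) (m : ℕ) (v : E) : ‖(f ^ m) v‖ ≤ ‖v‖ := by
  induction m with
  | zero => simp
  | succ m ih => rw [pow_succ', Module.End.mul_apply]; exact (hf _).trans ih

lemma exists_tendsto_of_summable_defect [CompleteSpace E] (hf : ∀ v, ‖f v‖ ≤ ‖v‖)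
    (hpow : ∀ v, ∃ a, Tendsto (fun m : ℕ => (f ^ m) v) atTop (𝓝 a)) {z : ℕ → E}
    (hz : Summable fun t => ‖z (t + 1) - f (z t)‖) : ∃ a, Tendsto z atTop (𝓝 a) := by
  choose P hP using hpow
  set δ : ℕ → E := fun t => z (t + 1) - f (z t)
  have hsum : Tendsto (fun t => ∑' s, if s < t then (f ^ (t - 1 - s)) (δ s) else 0) atTop
      (𝓝 (∑' s, P (δ s))) := by
    refine tendsto_tsum_of_dominated_convergence hz (fun s => ?_)
      (Eventually.of_forall fun t s => ?_)
    · have hshift : Tendsto (fun t => t - 1 - s) atTop atTop := by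
        simpa only [Nat.sub_sub] using tendsto_sub_atTop_nat (1 + s)
      refine ((hP (δ s)).comp hshift).congr' ?_
      filter_upwards [eventually_gt_atTop s] with t ht
      simp [ht]
    · split_ifs
      · exact norm_pow_apply_le hf _ _
      · simp
  refine ⟨P (z 0) + ∑' s, P (δ s), ((hP (z 0)).add hsum).congr fun t => ?_⟩
  rw [eq_pow_add_sum_pow_defect f z t,
    tsum_eq_sum (s := range t) fun s hs => if_neg (by simpa using hs)]
  exact congrArg _ (sum_congr rfl fun s hs => if_pos (mem_range.mp hs))

lemma exists_periodic_tendsto_sub_of_summable_defect [CompleteSpace E] [FiniteDimensional 𝕜 E]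
    (hf : ∀ v, ‖f v‖ ≤ ‖v‖) (hreg : IsAsymptoticallyRegular f) {T : ℕ} (hT : T ≠ 0)
    {g : ℕ → E} (hg : Function.Periodic g T)
    (hsum : ∑ k ∈ range T, g k ∈ LinearMap.range (f - 1)) {x : ℕ → E}
    (hx : Summable fun t => ‖x (t + 1) - (f (x t) + g t)‖) :
    ∃ y : ℕ → E, Function.Periodic y T ∧ Tendsto (fun t => x t - y t) atTop (𝓝 0) := by
  obtain ⟨y₀, hy₀⟩ := hreg.exists_periodic_forcedOrbit hT hg hsum
  set y := forcedOrbit f g y₀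
  obtain ⟨a, ha⟩ := exists_tendsto_of_summable_defect (z := fun t => x t - y t) hf
    hreg.exists_tendsto_pow <| hx.congr fun t => by
      rw [show y (t + 1) = f (y t) + g t from rfl, map_sub]
      congr 1
      abel
  refine ⟨fun t => y t + a, fun t => congrArg (· + a) (hy₀ t), ?_⟩
  simpa [sub_sub] using ha.sub_const a

end PerturbedRecursion

section Averaged

variable {E : Type*} [NormedAddCommGroup E] [NormedSpace ℝ E] {e : ℝ} {f : Module.End ℝ E}

/-- `f` is `e`-averaged: `f = e • 1 + (1 - e) • g` with `g` nonexpansive. The last field says this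
without naming `g`. -/
structure IsAveraged (e : ℝ) (f : Module.End ℝ E) : Prop where
  pos : 0 < e
  le_one : e ≤ 1
  norm_sub_smul_le : ∀ v, ‖f v - e • v‖ ≤ (1 - e) * ‖v‖

namespace IsAveraged

lemma norm_apply_le (hf : IsAveraged e f) (v : E) : ‖f v‖ ≤ ‖v‖ :=
  calc ‖f v‖ = ‖(f v - e • v) + e • v‖ := by rw [sub_add_cancel]
    _ ≤ (1 - e) * ‖v‖ + e * ‖v‖ := (norm_add_le _ _).trans <|
        add_le_add (hf.norm_sub_smul_le v) (by rw [norm_smul, Real.norm_of_nonneg hf.pos.le])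
    _ = ‖v‖ := by ring

lemma mul_sub_dual_le (hf : IsAveraged e f) {φ : StrongDual ℝ E} (hφ : ‖φ‖ ≤ 1) {v : E} {r : ℝ}
    (hv : ‖v‖ ≤ r) : e * (r - φ v) ≤ r - φ (f v) := by
  have hφv : φ (f v) - e * φ v ≤ (1 - e) * r :=
    calc φ (f v) - e * φ v = φ (f v - e • v) := by rw [map_sub, map_smul, smul_eq_mul]
      _ ≤ ‖f v - e • v‖ := (le_abs_self _).trans (φ.le_of_opNorm_le_of_le hφ le_rfl |>.trans_eq
          (one_mul _))
      _ ≤ (1 - e) * r := (hf.norm_sub_smul_le v).trans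
          (mul_le_mul_of_nonneg_left hv (sub_nonneg.mpr hf.le_one))
  linarith

lemma pow_mul_sub_dual_le (hf : IsAveraged e f) {φ : StrongDual ℝ E} (hφ : ‖φ‖ ≤ 1) {v : E} {r : ℝ}
    (hv : ‖v‖ ≤ r) (m : ℕ) : e ^ m * (r - φ v) ≤ r - φ ((f ^ m) v) := by
  induction m with
  | zero => simp
  | succ m ih =>
    calc e ^ (m + 1) * (r - φ v) = e * (e ^ m * (r - φ v)) := by ring
      _ ≤ e * (r - φ ((f ^ m) v)) := mul_le_mul_of_nonneg_left ih hf.pos.le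
      _ ≤ r - φ ((f ^ (m + 1)) v) := by
          rw [pow_succ', Module.End.mul_apply]
          exact hf.mul_sub_dual_le hφ ((norm_pow_apply_le hf.norm_apply_le m v).trans hv)

/-- A functional norming `(f ^ N) v` nearly norms every earlier `(f ^ j) v` as well, so an orbit
whose norms hardly decrease cannot cancel in its partial sums. -/
lemma pow_mul_sub_norm_sum_le (hf : IsAveraged e f) (v : E) (N : ℕ) :
    e ^ N * (N * ‖v‖ - ‖∑ j ∈ range N, (f ^ j) v‖) ≤ N * (‖v‖ - ‖(f ^ N) v‖) := by
  obtain ⟨φ, hφ, hφN : φ ((f ^ N) v) = ‖(f ^ N) v‖⟩ := exists_dual_vector'' ℝ ((f ^ N) v)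
  have hφ_le : ∀ w, φ w ≤ ‖w‖ := fun w =>
    (le_abs_self _).trans ((φ.le_of_opNorm_le_of_le hφ le_rfl).trans_eq (one_mul _))
  have hterm : ∀ j ∈ range N, e ^ N * (‖v‖ - φ ((f ^ j) v)) ≤ ‖v‖ - ‖(f ^ N) v‖ := by
    intro j hj
    have hjN : N - j + j = N := Nat.sub_add_cancel (mem_range.mp hj).le
    have hnorm := norm_pow_apply_le hf.norm_apply_le j v
    calc e ^ N * (‖v‖ - φ ((f ^ j) v)) ≤ e ^ (N - j) * (‖v‖ - φ ((f ^ j) v)) :=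
          mul_le_mul_of_nonneg_right
            (pow_le_pow_of_le_one hf.pos.le hf.le_one (Nat.sub_le N j))
            (sub_nonneg.mpr ((hφ_le _).trans hnorm))
      _ ≤ ‖v‖ - φ ((f ^ (N - j)) ((f ^ j) v)) := hf.pow_mul_sub_dual_le hφ hnorm _
      _ = ‖v‖ - ‖(f ^ N) v‖ := by rw [← Module.End.mul_apply, ← pow_add, hjN, hφN]
  calc e ^ N * (N * ‖v‖ - ‖∑ j ∈ range N, (f ^ j) v‖)
      ≤ e ^ N * (N * ‖v‖ - φ (∑ j ∈ range N, (f ^ j) v)) :=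
        mul_le_mul_of_nonneg_left (sub_le_sub_left (hφ_le _) _) (pow_nonneg hf.pos.le N)
    _ = ∑ j ∈ range N, e ^ N * (‖v‖ - φ ((f ^ j) v)) := by
        rw [← mul_sum, sum_sub_distrib, map_sum, sum_const, card_range, nsmul_eq_mul]
    _ ≤ N * (‖v‖ - ‖(f ^ N) v‖) := by
        simpa only [card_range, nsmul_eq_mul] using sum_le_card_nsmul _ _ _ hterm

lemma norm_sum_pow_increment_le (hf : IsAveraged e f) (v : E) (m N : ℕ) :
    ‖∑ j ∈ range N, (f ^ j) ((f ^ m) (f v - v))‖ ≤ 2 * ‖v‖ := by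
  have hterm : ∀ j, (f ^ j) ((f ^ m) (f v - v)) = (f ^ (m + (j + 1))) v - (f ^ (m + j)) v := by
    intro j
    rw [← Module.End.mul_apply, ← pow_add, map_sub, ← Module.End.mul_apply, ← pow_succ,
      add_comm j m, add_assoc]
  have htel : ∑ j ∈ range N, (f ^ j) ((f ^ m) (f v - v)) = (f ^ (m + N)) v - (f ^ m) v := by
    simpa only [hterm, add_zero] using sum_range_sub (fun j => (f ^ (m + j)) v) N
  rw [htel, two_mul]
  exact (norm_sub_le _ _).trans
    (add_le_add (norm_pow_apply_le hf.norm_apply_le _ v) (norm_pow_apply_le hf.norm_apply_le _ v))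

lemma isAsymptoticallyRegular (hf : IsAveraged e f) : IsAsymptoticallyRegular f := by
  intro v
  set a : ℕ → ℝ := fun m => ‖(f ^ m) (f v - v)‖
  have ha : Antitone a := antitone_nat_of_succ_le fun m => by
    simpa only [a, pow_succ', Module.End.mul_apply] using hf.norm_apply_le _
  obtain ⟨d, hd⟩ : ∃ d, Tendsto a atTop (𝓝 d) :=
    ⟨_, tendsto_atTop_ciInf ha ⟨0, Set.forall_mem_range.mpr fun m => norm_nonneg _⟩⟩
  have hfinite : ∀ m N : ℕ, e ^ N * (N * a m - 2 * ‖v‖) ≤ N * (a m - a (m + N)) := by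
    intro m N
    have hpow : (f ^ N) ((f ^ m) (f v - v)) = (f ^ (m + N)) (f v - v) := by
      rw [← Module.End.mul_apply, ← pow_add, add_comm]
    refine le_trans ?_ ((hf.pow_mul_sub_norm_sum_le ((f ^ m) (f v - v)) N).trans_eq (by rw [hpow]))
    gcongr
    · exact pow_nonneg hf.pos.le N
    · exact hf.norm_sum_pow_increment_le v m N
  have hlimit : ∀ N : ℕ, N * d ≤ 2 * ‖v‖ := by
    intro N
    have hle := le_of_tendsto_of_tendsto'
      (((hd.const_mul (N : ℝ)).sub_const (2 * ‖v‖)).const_mul (e ^ N))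
      ((hd.sub ((tendsto_add_atTop_iff_nat N).mpr hd)).const_mul (N : ℝ)) (hfinite · N)
    rw [sub_self, mul_zero] at hle
    exact sub_nonpos.mp (nonpos_of_mul_nonpos_right hle (pow_pos hf.pos N))
  have hd_nonpos : d ≤ 0 := by
    by_contra! hd_pos
    obtain ⟨N, hN⟩ := exists_nat_gt (2 * ‖v‖ / d)
    exact (hlimit N).not_gt ((div_lt_iff₀ hd_pos).mp hN)
  have hd_zero : d = 0 := hd_nonpos.antisymm (ge_of_tendsto' hd fun m => norm_nonneg _)
  exact tendsto_zero_iff_norm_tendsto_zero.mpr (hd_zero ▸ hd)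

end IsAveraged

end Averaged

section ClusterDiameter

variable {ι κ : Type*}

/-- The intra-cluster diameter of `w`: the largest difference of two coordinates with the same
cluster index `c`. -/
noncomputable def clusterDiam (c : ι → κ) (w : ι → ℝ) : ℝ :=
  ⨆ p : {p : ι × ι // c p.1 = c p.2}, |w p.1.1 - w p.1.2|

lemma clusterDiam_nonneg (c : ι → κ) (w : ι → ℝ) : 0 ≤ clusterDiam c w :=
  Real.iSup_nonneg fun _ => abs_nonneg _

lemma clusterDiam_le [Nonempty ι] {c : ι → κ} {w : ι → ℝ} {D : ℝ}
    (h : ∀ i j, c i = c j → w i - w j ≤ D) : clusterDiam c w ≤ D := by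
  have : Nonempty {p : ι × ι // c p.1 = c p.2} := ⟨⟨(Classical.arbitrary ι, _), rfl⟩⟩
  exact ciSup_le fun p => abs_sub_le_iff.mpr ⟨h _ _ p.2, h _ _ p.2.symm⟩

lemma clusterDiam_add_comp (c : ι → κ) (w : ι → ℝ) (f : κ → ℝ) :
    clusterDiam c (w + f ∘ c) = clusterDiam c w := by
  refine iSup_congr fun p => ?_
  rw [Pi.add_apply, Pi.add_apply, Function.comp_apply, Function.comp_apply, p.2,
    add_sub_add_right_eq_sub]

/-- The smallest coordinate of `w` in each cluster; an empty cluster gets the junk value `0`. -/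
noncomputable def clusterMin (c : ι → κ) (w : ι → ℝ) (q : κ) : ℝ :=
  ⨅ i : {i // c i = q}, w i

variable {c : ι → κ}

section Finite

variable [Finite ι]

lemma abs_sub_le_clusterDiam (w : ι → ℝ) {i j : ι} (hij : c i = c j) :
    |w i - w j| ≤ clusterDiam c w :=
  le_ciSup (f := fun p : {p : ι × ι // c p.1 = c p.2} => |w p.1.1 - w p.1.2|)
    (Set.finite_range _).bddAbove ⟨(i, j), hij⟩

lemma clusterMin_le (w : ι → ℝ) (i : ι) : clusterMin c w (c i) ≤ w i :=
  ciInf_le (f := fun j : {j // c j = c i} => w j) (Set.finite_range _).bddBelow ⟨i, rfl⟩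

lemma sub_clusterMin_le_clusterDiam (w : ι → ℝ) (i : ι) :
    w i - clusterMin c w (c i) ≤ clusterDiam c w := by
  have : Nonempty {j // c j = c i} := ⟨⟨i, rfl⟩⟩
  refine sub_le_comm.mp (le_ciInf fun j => sub_le_comm.mp ?_)
  exact (le_abs_self _).trans (abs_sub_le_clusterDiam w j.2.symm)

lemma tendsto_abs_sub_of_tendsto_clusterDiam {x y : ℕ → ι → ℝ}
    (hx : Tendsto (fun t => clusterDiam c (x t)) atTop (𝓝 0))
    (hxy : Tendsto (fun t => x t - y t) atTop (𝓝 0)) {i j : ι} (hij : c i = c j) :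
    Tendsto (fun t => |x t i - y t j|) atTop (𝓝 0) := by
  have hj : Tendsto (fun t => |x t j - y t j|) atTop (𝓝 0) := by
    simpa using (tendsto_pi_nhds.mp hxy j).abs
  refine squeeze_zero (fun _ => abs_nonneg _) (fun t => ?_) (by simpa using hx.add hj)
  exact (abs_sub_le _ (x t j) _).trans (add_le_add_left (abs_sub_le_clusterDiam _ hij) _)

end Finite

/-- Since `p` and `q` give equal weight to every cluster, `w` may be replaced by its nonnegative
excess over the cluster minima. -/
lemma dotProduct_sub_dotProduct_le [Fintype ι] {p q : ι → ℝ}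
    (hpq : ∀ f : κ → ℝ, p ⬝ᵥ (f ∘ c) = q ⬝ᵥ (f ∘ c)) (w : ι → ℝ) :
    p ⬝ᵥ w - q ⬝ᵥ w ≤ (∑ k, (p k - min (p k) (q k))) * clusterDiam c w := by
  set f := clusterMin c w
  calc p ⬝ᵥ w - q ⬝ᵥ w = (p - q) ⬝ᵥ (w - f ∘ c) := by
        rw [dotProduct_sub, sub_dotProduct, sub_dotProduct, hpq f, sub_self, sub_zero]
    _ ≤ ∑ k, (p k - min (p k) (q k)) * clusterDiam c w := by
        refine sum_le_sum fun k _ => ?_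
        calc (p k - q k) * (w k - f (c k)) ≤ (p k - min (p k) (q k)) * (w k - f (c k)) :=
              mul_le_mul_of_nonneg_right (sub_le_sub_left (min_le_right _ _) _)
                (sub_nonneg.mpr (clusterMin_le w k))
          _ ≤ (p k - min (p k) (q k)) * clusterDiam c w :=
              mul_le_mul_of_nonneg_left (sub_clusterMin_le_clusterDiam w k)
                (sub_nonneg.mpr (min_le_left _ _))
    _ = (∑ k, (p k - min (p k) (q k))) * clusterDiam c w := (sum_mul _ _ _).symm

end ClusterDiameter

section Lumpable

variable {ι κ : Type*} [Fintype ι] [Fintype κ]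

/-- `P` is lumpable along the cluster map `c` with quotient `B` (Kemeny and Snell): the vectors
constant on clusters form an invariant subspace, on which `P` acts as `B`. This is condition (B3*)
for a single matrix. -/
def IsLumpable (c : ι → κ) (P : Matrix ι ι ℝ) (B : Matrix κ κ ℝ) : Prop :=
  ∀ f : κ → ℝ, P *ᵥ (f ∘ c) = (B *ᵥ f) ∘ c

variable {c : ι → κ} {P Q : Matrix ι ι ℝ} {B : Matrix κ κ ℝ}

lemma isLumpable_of_sum_eq [DecidableEq κ]
    (h : ∀ i q, ∑ j with c j = q, P i j = B (c i) q) : IsLumpable c P B := by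
  intro f
  ext i
  change ∑ j, P i j * f (c j) = ∑ q, B (c i) q * f q
  rw [← sum_fiberwise univ c]
  refine sum_congr rfl fun q _ => ?_
  rw [← h, sum_mul]
  exact sum_congr rfl fun j hj => by rw [(mem_filter.mp hj).2]

namespace IsLumpable

lemma mul {B' : Matrix κ κ ℝ} (hP : IsLumpable c P B) (hQ : IsLumpable c Q B') :
    IsLumpable c (P * Q) (B * B') := fun f => by
  rw [← Matrix.mulVec_mulVec, ← Matrix.mulVec_mulVec, hQ, hP]

lemma comp_mem_range (hP : IsLumpable c P B) (a : κ → ℝ) :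
    (B *ᵥ a - a) ∘ c ∈ LinearMap.range (P.mulVecLin - 1) := by
  refine ⟨a ∘ c, ?_⟩
  rw [LinearMap.sub_apply, Module.End.one_apply, Matrix.mulVecLin_apply, hP]
  rfl

variable [DecidableEq ι]

lemma one [DecidableEq κ] : IsLumpable c (1 : Matrix ι ι ℝ) (1 : Matrix κ κ ℝ) := fun f => by
  rw [Matrix.one_mulVec, Matrix.one_mulVec]

lemma norm_mulVec_sub_mulVec_le (hP : IsLumpable c P B) (hQ : IsLumpable c Q B)
    (hP_stoch : P ∈ rowStochastic ℝ ι) (hQ_stoch : Q ∈ rowStochastic ℝ ι) (w : ι → ℝ) :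
    ‖P *ᵥ w - Q *ᵥ w‖ ≤ clusterDiam c w := by
  have hle : ∀ {M N : Matrix ι ι ℝ}, IsLumpable c M B → IsLumpable c N B →
      M ∈ rowStochastic ℝ ι → N ∈ rowStochastic ℝ ι → ∀ i,
      (M *ᵥ w) i - (N *ᵥ w) i ≤ clusterDiam c w := by
    intro M N hM hN hM_stoch hN_stoch i
    refine (dotProduct_sub_dotProduct_le (p := M i) (q := N i)
      (fun f => congrFun ((hM f).trans (hN f).symm) i) w).trans
      (mul_le_of_le_one_left (clusterDiam_nonneg c w) ?_)
    rw [← sum_row_of_mem_rowStochastic hM_stoch i]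
    exact sum_le_sum fun k _ => sub_le_self _ (le_min (hM_stoch.1 i k) (hN_stoch.1 i k))
  exact (pi_norm_le_iff_of_nonneg (clusterDiam_nonneg c w)).mpr fun i =>
    abs_sub_le_iff.mpr ⟨hle hP hQ hP_stoch hQ_stoch i, hle hQ hP hQ_stoch hP_stoch i⟩

lemma clusterDiam_mulVec_le [Nonempty ι] (hP : IsLumpable c P B) (hP_stoch : P ∈ rowStochastic ℝ ι)
    {ε : ℝ} (hε : ∀ i j, c i = c j → ε ≤ ∑ k, min (P i k) (P j k)) (w : ι → ℝ) :
    clusterDiam c (P *ᵥ w) ≤ (1 - ε) * clusterDiam c w := by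
  refine clusterDiam_le fun i j hij => ?_
  have hweights : ∀ f : κ → ℝ, P i ⬝ᵥ (f ∘ c) = P j ⬝ᵥ (f ∘ c) := fun f => by
    have hf := hP f
    exact (congrFun hf i).trans ((congrArg (B *ᵥ f) hij).trans (congrFun hf j).symm)
  refine (dotProduct_sub_dotProduct_le hweights w).trans
    (mul_le_mul_of_nonneg_right ?_ (clusterDiam_nonneg c w))
  rw [sum_sub_distrib, sum_row_of_mem_rowStochastic hP_stoch]
  exact sub_le_sub_left (hε i j hij) 1

end IsLumpable

end Lumpable

section RowStochastic

variable {ι : Type*} [Fintype ι]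

lemma norm_mulVec_le_mul_norm {M : Matrix ι ι ℝ} (hM : ∀ i j, 0 ≤ M i j) {s : ℝ} (hs : 0 ≤ s)
    (hsum : ∀ i, ∑ j, M i j ≤ s) (v : ι → ℝ) : ‖M *ᵥ v‖ ≤ s * ‖v‖ := by
  refine (pi_norm_le_iff_of_nonneg (mul_nonneg hs (norm_nonneg v))).mpr fun i => ?_
  calc |∑ j, M i j * v j| ≤ ∑ j, |M i j * v j| := abs_sum_le_sum_abs _ _
    _ ≤ ∑ j, M i j * ‖v‖ := sum_le_sum fun j _ => by
        rw [abs_mul, abs_of_nonneg (hM i j)]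
        exact mul_le_mul_of_nonneg_left (norm_le_pi_norm v j) (hM i j)
    _ = (∑ j, M i j) * ‖v‖ := (sum_mul _ _ _).symm
    _ ≤ s * ‖v‖ := mul_le_mul_of_nonneg_right (hsum i) (norm_nonneg v)

lemma isAveraged_mulVecLin [DecidableEq ι] [Nonempty ι] {P : Matrix ι ι ℝ}
    (hP : P ∈ rowStochastic ℝ ι) {e : ℝ} (he : 0 < e) (hdiag : ∀ i, e ≤ P i i) :
    IsAveraged e P.mulVecLin := by
  have he1 : e ≤ 1 := (hdiag (Classical.arbitrary ι)).trans (le_one_of_mem_rowStochastic hP)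
  refine ⟨he, he1, fun v => ?_⟩
  have hnonneg : ∀ i j, 0 ≤ (P - e • (1 : Matrix ι ι ℝ)) i j := by
    intro i j
    rcases eq_or_ne i j with rfl | hij
    · simpa using hdiag i
    · simpa [hij] using hP.1 i j
  have hsum : ∀ i, ∑ j, (P - e • (1 : Matrix ι ι ℝ)) i j ≤ 1 - e := by
    intro i
    simp [Matrix.one_apply, sum_row_of_mem_rowStochastic hP]
  simpa [Matrix.sub_mulVec, Matrix.smul_mulVec] using
    norm_mulVec_le_mul_norm hnonneg (sub_nonneg.mpr he1) hsum v

end RowStochastic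

section Support

variable {ι : Type*} [Fintype ι] {P Q : Matrix ι ι ℝ}

lemma mul_apply_pos (hP : ∀ i j, 0 ≤ P i j) (hQ : ∀ i j, 0 ≤ Q i j) {i j k : ι}
    (hik : 0 < P i k) (hkj : 0 < Q k j) : 0 < (P * Q) i j :=
  sum_pos' (fun l _ => mul_nonneg (hP i l) (hQ l j)) ⟨k, mem_univ k, mul_pos hik hkj⟩

lemma mul_apply_eq_zero_or_le (hP : ∀ i j, 0 ≤ P i j) (hQ : ∀ i j, 0 ≤ Q i j) {a b : ℝ}
    (hb : 0 ≤ b) (hPa : ∀ i j, P i j = 0 ∨ a ≤ P i j) (hQb : ∀ i j, Q i j = 0 ∨ b ≤ Q i j)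
    (i j : ι) : (P * Q) i j = 0 ∨ a * b ≤ (P * Q) i j := by
  by_cases h : ∀ k, P i k * Q k j = 0
  · exact Or.inl (sum_eq_zero fun k _ => h k)
  · obtain ⟨k, hk⟩ := not_forall.mp h
    obtain ⟨hPk, hQk⟩ := mul_ne_zero_iff.mp hk
    refine Or.inr ?_
    calc a * b ≤ P i k * Q k j :=
          mul_le_mul ((hPa i k).resolve_left hPk) ((hQb k j).resolve_left hQk) hb (hP i k)
      _ ≤ (P * Q) i j := single_le_sum (f := fun k => P i k * Q k j)
          (fun l _ => mul_nonneg (hP i l) (hQ l j)) (mem_univ k)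

/-- The in-neighbours of `i` in the directed graph `G(P)`, whose edges `k → i` are the positive
entries `P i k`. -/
noncomputable def inNeighbors (P : Matrix ι ι ℝ) (i : ι) : Finset ι :=
  {k | 0 < P i k}

lemma mem_inNeighbors {i k : ι} : k ∈ inNeighbors P i ↔ 0 < P i k := by
  simp [inNeighbors]

lemma inNeighbors_subset_mul (hP : ∀ i j, 0 ≤ P i j) (hQ : ∀ i j, 0 ≤ Q i j)
    (hdiag : ∀ i, 0 < Q i i) (i : ι) : inNeighbors P i ⊆ inNeighbors (P * Q) i := fun k hk =>
  mem_inNeighbors.mpr (mul_apply_pos hP hQ (mem_inNeighbors.mp hk) (hdiag k))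

lemma exists_rel_not_and_of_reflTransGen {α : Type*} {r : α → α → Prop} {p : α → Prop} {a b : α}
    (h : Relation.ReflTransGen r a b) (ha : ¬ p a) (hb : p b) : ∃ x y, r x y ∧ ¬ p x ∧ p y := by
  by_contra! hclosed
  exact ha (h.head_induction_on hb fun hxy _ hy => by_contra fun hx => hclosed _ _ hxy hx hy)

end Support

section Scrambling

variable {n : ℕ} {P Q : Matrix (Fin n) (Fin n) ℝ}

lemma card_inNeighbors_lt_mul (hP : ∀ i j, 0 ≤ P i j) (hQ : ∀ i j, 0 ≤ Q i j)
    (hQ_diag : ∀ i, 0 < Q i i) {i v : Fin n} (hi : i ∈ inNeighbors P i) (hv : Reaches Q v i)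
    (hiv : v ∉ inNeighbors P i) : #(inNeighbors P i) < #(inNeighbors (P * Q) i) := by
  obtain ⟨l, k, hkl, hl, hk⟩ :=
    exists_rel_not_and_of_reflTransGen (p := (· ∈ inNeighbors P i)) hv hiv hi
  refine card_lt_card ((ssubset_iff_of_subset (inNeighbors_subset_mul hP hQ hQ_diag i)).mpr
    ⟨l, mem_inNeighbors.mpr ?_, hl⟩)
  exact mul_apply_pos hP hQ (mem_inNeighbors.mp hk) hkl

lemma exists_common_or_card_inNeighbors_lt (hP : ∀ i j, 0 ≤ P i j) (hP_diag : ∀ i, 0 < P i i)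
    (hQ : ∀ i j, 0 ≤ Q i j) (hQ_diag : ∀ i, 0 < Q i i) {i j v : Fin n} (hi : Reaches Q v i)
    (hj : Reaches Q v j) :
    (∃ k, 0 < (P * Q) i k ∧ 0 < (P * Q) j k) ∨
      #(inNeighbors P i) + #(inNeighbors P j) <
        #(inNeighbors (P * Q) i) + #(inNeighbors (P * Q) j) := by
  have hle := fun l => card_le_card (inNeighbors_subset_mul hP hQ hQ_diag l)
  have hlt : ∀ {l}, Reaches Q v l → v ∉ inNeighbors P l →
      #(inNeighbors P l) < #(inNeighbors (P * Q) l) :=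
    card_inNeighbors_lt_mul hP hQ hQ_diag (mem_inNeighbors.mpr (hP_diag _))
  by_cases hiv : v ∈ inNeighbors P i
  · by_cases hjv : v ∈ inNeighbors P j
    · exact Or.inl ⟨v, mul_apply_pos hP hQ (mem_inNeighbors.mp hiv) (hQ_diag v),
        mul_apply_pos hP hQ (mem_inNeighbors.mp hjv) (hQ_diag v)⟩
    · exact Or.inr (add_lt_add_of_le_of_lt (hle i) (hlt hj hjv))
  · exact Or.inr (add_lt_add_of_lt_of_le (hlt hi hiv) (hle j))

end Scrambling

section Summability

lemma summable_of_forall_shift_le_mul {d : ℕ → ℝ} (hd : ∀ t, 0 ≤ d t) {q : ℝ} (hq : q < 1) {M : ℕ}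
    (hM : ∀ t, d (t + M) ≤ q * d t) : Summable d := by
  refine summable_of_sum_range_le (c := (∑ t ∈ range M, d t) / (1 - q)) hd fun N => ?_
  have hsplit : ∑ t ∈ range N, d t ≤ ∑ t ∈ range M, d t + q * ∑ t ∈ range N, d t :=
    calc ∑ t ∈ range N, d t ≤ ∑ t ∈ range (M + N), d t :=
          sum_le_sum_of_subset_of_nonneg (range_subset_range.mpr (Nat.le_add_left N M))
            fun t _ _ => hd t
      _ = ∑ t ∈ range M, d t + ∑ t ∈ range N, d (M + t) := sum_range_add d M N
      _ ≤ ∑ t ∈ range M, d t + q * ∑ t ∈ range N, d t := by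
          rw [mul_sum]
          exact add_le_add_right (sum_le_sum fun t _ => add_comm t M ▸ hM t) _
  rw [le_div_iff₀ (sub_pos.mpr hq)]
  linarith

end Summability

section ProdFrom

variable {n : ℕ} {A : ℕ → Matrix (Fin n) (Fin n) ℝ}

lemma prodFrom_add (A : ℕ → Matrix (Fin n) (Fin n) ℝ) (a m k : ℕ) :
    prodFrom A a (m + k) = prodFrom A (a + m) k * prodFrom A a m := by
  induction k with
  | zero => simp [prodFrom]
  | succ k ih => rw [← add_assoc, prodFrom, prodFrom, ih, Matrix.mul_assoc, add_assoc]

lemma prodFrom_mem {S : Submonoid (Matrix (Fin n) (Fin n) ℝ)} (hA : ∀ t, A t ∈ S) (a m : ℕ) :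
    prodFrom A a m ∈ S := by
  induction m with
  | zero => exact S.one_mem
  | succ m ih => exact S.mul_mem (hA _) ih

lemma prodFrom_isLumpable {κ : Type*} [Fintype κ] [DecidableEq κ] {c : Fin n → κ}
    {B : Matrix κ κ ℝ} (hA : ∀ t, IsLumpable c (A t) B) (a m : ℕ) :
    IsLumpable c (prodFrom A a m) (B ^ m) := by
  induction m with
  | zero => simpa only [prodFrom, pow_zero] using IsLumpable.one
  | succ m ih => simpa only [prodFrom, pow_succ'] using (hA _).mul ih

lemma exists_eq_prodFrom_mulVec_add_comp {κ : Type*} [Fintype κ] {c : Fin n → κ}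
    {B : Matrix κ κ ℝ} (hA : ∀ t, IsLumpable c (A t) B) {h : ℕ → κ → ℝ} {x : ℕ → Fin n → ℝ}
    (hx : ∀ t, x (t + 1) = A t *ᵥ x t + h t ∘ c) (a m : ℕ) :
    ∃ g : κ → ℝ, x (a + m) = prodFrom A a m *ᵥ x a + g ∘ c := by
  induction m with
  | zero => exact ⟨0, by simp [prodFrom]⟩
  | succ m ih =>
    obtain ⟨g, hg⟩ := ih
    refine ⟨B *ᵥ g + h (a + m), ?_⟩
    rw [← add_assoc, hx, hg, Matrix.mulVec_add, hA, prodFrom, Matrix.mulVec_mulVec, add_assoc]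
    rfl

lemma prodFrom_diag_pos (hA : ∀ t, A t ∈ rowStochastic ℝ (Fin n)) (hdiag : ∀ t i, 0 < A t i i)
    (a m : ℕ) (i : Fin n) : 0 < prodFrom A a m i i := by
  induction m with
  | zero => simp [prodFrom]
  | succ m ih => exact mul_apply_pos (hA _).1 (prodFrom_mem hA a m).1 (hdiag _ i) ih

lemma prodFrom_pos_of_sum_pos (hA : ∀ t, A t ∈ rowStochastic ℝ (Fin n))
    (hdiag : ∀ t i, 0 < A t i i) (a m : ℕ) {i j : Fin n}
    (h : 0 < (∑ s ∈ range m, A (a + s)) i j) : 0 < prodFrom A a m i j := by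
  induction m with
  | zero => simp at h
  | succ m ih =>
    have hprod := (prodFrom_mem hA a m).1
    rw [sum_range_succ, Matrix.add_apply] at h
    rcases ((hA (a + m)).1 i j).eq_or_lt with hzero | hpos
    · rw [← hzero, add_zero] at h
      exact mul_apply_pos (hA _).1 hprod (hdiag _ i) (ih h)
    · exact mul_apply_pos (hA _).1 hprod hpos (prodFrom_diag_pos hA hdiag a m j)

lemma prodFrom_apply_eq_zero_or_pow_le (hA : ∀ t, A t ∈ rowStochastic ℝ (Fin n)) {e : ℝ}
    (he : 0 ≤ e) (hAe : ∀ t i j, A t i j = 0 ∨ e ≤ A t i j) (a m : ℕ) (i j : Fin n) :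
    prodFrom A a m i j = 0 ∨ e ^ m ≤ prodFrom A a m i j := by
  induction m generalizing i j with
  | zero => rcases eq_or_ne i j with rfl | hij <;> simp [prodFrom, *]
  | succ m ih =>
    rw [pow_succ']
    exact mul_apply_eq_zero_or_le (hA _).1 (prodFrom_mem hA a m).1 (pow_nonneg he m) (hAe _) ih i j

/-- Prepending a window of length `L` either makes rows `i` and `j` overlap or enlarges one of
their supports, which can happen at most `2 * n` times. -/
lemma exists_prodFrom_common_pos (hA : ∀ t, A t ∈ rowStochastic ℝ (Fin n))
    (hdiag : ∀ t i, 0 < A t i i) {L : ℕ} {i j : Fin n}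
    (hroot : ∀ t, ∃ v, Reaches (∑ s ∈ range L, A (t + s)) v i ∧
      Reaches (∑ s ∈ range L, A (t + s)) v j) (a : ℕ) :
    ∃ k, 0 < prodFrom A a ((2 * n + 1) * L) i k ∧ 0 < prodFrom A a ((2 * n + 1) * L) j k := by
  have hgrow : ∀ w a, (∃ k, 0 < prodFrom A a (w * L) i k ∧ 0 < prodFrom A a (w * L) j k) ∨
      w ≤ #(inNeighbors (prodFrom A a (w * L)) i) + #(inNeighbors (prodFrom A a (w * L)) j) := by
    intro w
    induction w with
    | zero => exact fun a => Or.inr (Nat.zero_le _)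
    | succ w ih =>
      intro a
      rw [add_one_mul, add_comm, prodFrom_add]
      have hP := (prodFrom_mem hA (a + L) (w * L)).1
      have hQ := (prodFrom_mem hA a L).1
      have hQ_diag := prodFrom_diag_pos hA hdiag a L
      have hreach : ∀ {v l}, Reaches (∑ s ∈ range L, A (a + s)) v l →
          Reaches (prodFrom A a L) v l :=
        Relation.ReflTransGen.mono (fun _ _ => prodFrom_pos_of_sum_pos hA hdiag a L) _ _
      obtain ⟨v, hi, hj⟩ := hroot a
      rcases ih (a + L) with ⟨k, hik, hjk⟩ | hcard
      · exact Or.inl ⟨k, mul_apply_pos hP hQ hik (hQ_diag k), mul_apply_pos hP hQ hjk (hQ_diag k)⟩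
      · exact (exists_common_or_card_inNeighbors_lt hP (prodFrom_diag_pos hA hdiag _ _) hQ hQ_diag
          (hreach hi) (hreach hj)).imp_right hcard.trans_lt
  refine (hgrow (2 * n + 1) a).resolve_right fun hcard => ?_
  have hi := card_finset_fin_le (inNeighbors (prodFrom A a ((2 * n + 1) * L)) i)
  have hj := card_finset_fin_le (inNeighbors (prodFrom A a ((2 * n + 1) * L)) j)
  omega

lemma pow_le_sum_min_prodFrom (hA : ∀ t, A t ∈ rowStochastic ℝ (Fin n)) {e : ℝ} (he : 0 < e)
    (hAe : ∀ t i j, A t i j = 0 ∨ e ≤ A t i j) (hdiag : ∀ t i, 0 < A t i i) {L : ℕ} {i j : Fin n}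
    (hroot : ∀ t, ∃ v, Reaches (∑ s ∈ range L, A (t + s)) v i ∧
      Reaches (∑ s ∈ range L, A (t + s)) v j) (a : ℕ) :
    e ^ ((2 * n + 1) * L) ≤ ∑ k, min (prodFrom A a ((2 * n + 1) * L) i k)
      (prodFrom A a ((2 * n + 1) * L) j k) := by
  obtain ⟨k, hik, hjk⟩ := exists_prodFrom_common_pos hA hdiag hroot a
  set M := (2 * n + 1) * L
  have hnonneg := (prodFrom_mem hA a M).1
  have hle := prodFrom_apply_eq_zero_or_pow_le hA he.le hAe a M
  calc e ^ M ≤ min (prodFrom A a M i k) (prodFrom A a M j k) :=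
        le_min ((hle i k).resolve_left hik.ne') ((hle j k).resolve_left hjk.ne')
    _ ≤ ∑ k, min (prodFrom A a M i k) (prodFrom A a M j k) :=
        single_le_sum (f := fun k => min (prodFrom A a M i k) (prodFrom A a M j k))
          (fun l _ => le_min (hnonneg i l) (hnonneg j l)) (mem_univ k)

lemma summable_clusterDiam [Nonempty (Fin n)] {κ : Type*} [Fintype κ] {c : Fin n → κ}
    (hA : ∀ t, A t ∈ rowStochastic ℝ (Fin n)) {e : ℝ} (he : 0 < e)
    (hAe : ∀ t i j, A t i j = 0 ∨ e ≤ A t i j) (hdiag : ∀ t i, 0 < A t i i) {L : ℕ}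
    (hroot : ∀ i j, c i = c j → ∀ t, ∃ v, Reaches (∑ s ∈ range L, A (t + s)) v i ∧
      Reaches (∑ s ∈ range L, A (t + s)) v j)
    {B : Matrix κ κ ℝ} (hlump : ∀ t, IsLumpable c (A t) B) {h : ℕ → κ → ℝ} {x : ℕ → Fin n → ℝ}
    (hx : ∀ t, x (t + 1) = A t *ᵥ x t + h t ∘ c) : Summable fun t => clusterDiam c (x t) := by
  classical
  refine summable_of_forall_shift_le_mul (M := (2 * n + 1) * L)
    (fun t => clusterDiam_nonneg c (x t))
    (sub_lt_self 1 (pow_pos he ((2 * n + 1) * L))) fun t => ?_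
  obtain ⟨g, hg⟩ := exists_eq_prodFrom_mulVec_add_comp hlump hx t ((2 * n + 1) * L)
  rw [hg, clusterDiam_add_comp]
  exact (prodFrom_isLumpable hlump t _).clusterDiam_mulVec_le (prodFrom_mem hA t _)
    (fun i j hij => pow_le_sum_min_prodFrom hA he hAe hdiag (hroot i j hij) t) (x t)

end ProdFrom

section ConstantComparison

variable {ι κ : Type*} [Fintype ι] [DecidableEq ι] [Nonempty ι] [Fintype κ]

/-- By lumpability, replacing the matrix `A t` by `A 0` costs at most the intra-cluster
diameter at each step. -/
lemma exists_periodic_tendsto_sub_of_summable_clusterDiam {A : ℕ → Matrix ι ι ℝ}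
    (hA : ∀ t, A t ∈ rowStochastic ℝ ι) {e : ℝ} (he : 0 < e) (hdiag : ∀ i, e ≤ A 0 i i)
    {c : ι → κ} {B : Matrix κ κ ℝ} (hlump : ∀ t, IsLumpable c (A t) B) {T : ℕ} (hT : T ≠ 0)
    {h : ℕ → κ → ℝ} (hh : Function.Periodic h T) {a : κ → ℝ}
    (hsum : ∑ k ∈ range T, h k = B *ᵥ a - a) {x : ℕ → ι → ℝ}
    (hx : ∀ t, x (t + 1) = A t *ᵥ x t + h t ∘ c) (hdiam : Summable fun t => clusterDiam c (x t)) :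
    ∃ y : ℕ → ι → ℝ, Function.Periodic y T ∧ Tendsto (fun t => x t - y t) atTop (𝓝 0) := by
  have havg := isAveraged_mulVecLin (hA 0) he hdiag
  have hforcing : ∑ k ∈ range T, h k ∘ c ∈ LinearMap.range ((A 0).mulVecLin - 1) := by
    convert (hlump 0).comp_mem_range a
    rw [← hsum]
    ext i
    simp
  refine exists_periodic_tendsto_sub_of_summable_defect havg.norm_apply_le
    havg.isAsymptoticallyRegular hT (fun t => congrArg (· ∘ c) (hh t)) hforcing
    (hdiam.of_nonneg_of_le (fun t => norm_nonneg _) fun t => ?_)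
  rw [hx, add_sub_add_right_eq_sub, Matrix.mulVecLin_apply]
  exact (hlump t).norm_mulVec_sub_mulVec_le (hlump 0) (hA t) (hA 0) (x t)

end ConstantComparison

lemma IsClustering.exists_index {n K : ℕ} {C : Fin K → Finset (Fin n)} (hC : IsClustering C) :
    ∃ c : Fin n → Fin K, ∀ i p, i ∈ C p ↔ c i = p := by
  choose c hc using hC.2
  refine ⟨c, fun i p => ⟨fun hi => ?_, fun hip => hip ▸ hc i⟩⟩
  by_contra hne
  exact disjoint_left.mp (hC.1 _ _ hne) (hc i) hi

theorem stmt16_general {n K : ℕ} (C : Fin K → Finset (Fin n)) (hC : IsClustering C)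
    (A : ℕ → Matrix (Fin n) (Fin n) ℝ) (hstoch : ∀ t, IsStochastic (A t))
    (e : ℝ) (he : 0 < e) (hB1 : ∀ t i j, A t i j = 0 ∨ e ≤ A t i j) (hB2 : ∀ t i, e ≤ A t i i)
    (B : Matrix (Fin K) (Fin K) ℝ) (hB3 : ∀ t p q, ∀ i ∈ C p, ∑ j ∈ C q, A t i j = B p q)
    (L : ℕ) (hspan : ∀ t, HasClusterSpanningTrees C (∑ s ∈ range L, A (t + s)))
    (T : ℕ) (hT : 1 ≤ T) (h : ℕ → Fin K → ℝ) (hh : ∀ t, h (t + T) = h t)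
    (a : Fin K → ℝ) (hsum : ∑ k ∈ range T, h k = B *ᵥ a - a)
    (I : ℕ → Fin n → ℝ) (hI : ∀ t p, ∀ i ∈ C p, I t i = h t p)
    (x : ℕ → Fin n → ℝ) (hx : ∀ t, x (t + 1) = A t *ᵥ x t + I t) :
    ∃ v : Fin K → ℕ → ℝ, (∀ p t, v p (t + T) = v p t) ∧
      ∀ p, ∀ j ∈ C p, Tendsto (fun t => |x t j - v p t|) atTop (𝓝 0) := by
  rcases isEmpty_or_nonempty (Fin n) with hn | hn
  · exact ⟨0, fun _ _ => rfl, fun _ j => hn.elim j⟩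
  obtain ⟨c, hc⟩ := hC.exists_index
  have hmem : ∀ i, i ∈ C (c i) := fun i => (hc i _).mpr rfl
  have hA : ∀ t, A t ∈ rowStochastic ℝ (Fin n) := fun t => mem_rowStochastic_iff_sum.mpr (hstoch t)
  have hlump : ∀ t, IsLumpable c (A t) B := fun t => isLumpable_of_sum_eq fun i q => by
    rw [← hB3 t (c i) q i (hmem i)]
    exact sum_congr (by ext j; simp [hc]) fun _ _ => rfl
  have hxc : ∀ t, x (t + 1) = A t *ᵥ x t + h t ∘ c := fun t => by
    rw [hx, show I t = h t ∘ c from funext fun i => hI t (c i) i (hmem i)]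
  have hroot : ∀ i j, c i = c j → ∀ t, ∃ v, Reaches (∑ s ∈ range L, A (t + s)) v i ∧
      Reaches (∑ s ∈ range L, A (t + s)) v j := fun i j hij t =>
    (hspan t (c i)).imp fun v hv => ⟨hv i (hmem i), hv j (hij ▸ hmem j)⟩
  have hdiam : Summable fun t => clusterDiam c (x t) :=
    summable_clusterDiam hA he hB1 (fun t i => he.trans_le (hB2 t i)) hroot hlump hxc
  obtain ⟨y, hy, hxy⟩ := exists_periodic_tendsto_sub_of_summable_clusterDiam hA he (hB2 0) hlump
    (Nat.one_le_iff_ne_zero.mp hT) hh hsum hxc hdiam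
  refine ⟨fun p t => y t (Function.invFun c p), fun p t => congrFun (hy t) _, fun p j hj => ?_⟩
  obtain rfl := (hc j p).mp hj
  exact tendsto_abs_sub_of_tendsto_clusterDiam hdiam.tendsto_atTop_zero hxy
    (Function.invFun_eq ⟨j, rfl⟩).symm

theorem stmt16 {n K : ℕ} (C : Fin K → Finset (Fin n)) (hC : IsClustering C)
    (A : ℕ → Matrix (Fin n) (Fin n) ℝ)
    (hstoch : ∀ t, IsStochastic (A t))
    (e : ℝ) (he : 0 < e)
    (hB1 : ∀ t i j, A t i j = 0 ∨ e ≤ A t i j)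
    (hB2 : ∀ t i, e ≤ A t i i)
    (B : Matrix (Fin K) (Fin K) ℝ) (hBstoch : IsStochastic B)
    (hB3 : ∀ t p q, ∀ i ∈ C p, ∑ j ∈ C q, A t i j = B p q)
    (L : ℕ) (hL : 0 < L)
    (hspan : ∀ t, HasClusterSpanningTrees C (∑ s ∈ Finset.range L, A (t + s)))
    (T : ℕ) (hT : 1 ≤ T)
    (u : ℕ → ℝ) (hu : ∀ t, u (t + T) = u t)
    (husum : ∑ k ∈ Finset.range T, u k = 0)
    (α : Fin K → ℝ)
    (I : ℕ → Fin n → ℝ)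
    (hI : ∀ t p, ∀ i ∈ C p, I t i = α p * u t)
    (x : ℕ → Fin n → ℝ)
    (hx : ∀ t, x (t + 1) = (A t).mulVec (x t) + I t) :
    ∃ v : Fin K → ℕ → ℝ, (∀ p t, v p (t + T) = v p t) ∧
      ∀ p, ∀ j ∈ C p, Tendsto (fun t => |x t j - v p t|) atTop (𝓝 0) :=
  stmt16_general C hC A hstoch e he hB1 hB2 B hB3 L hspan T hT (fun t p => α p * u t)
    (fun t => by simp only [hu]) 0 (by ext p; simp [← mul_sum, husum]) I hI x hx
end
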